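/- arXiv:math/0702046 — 10 statements merged into one kernel-verified Lean document; each statement's English description precedes it below -/
import Mathlib

section
/- Let a, b be n×n matrices over R with a² = b² = 1, such that every entry of a lies in the prime subring of R (the image of the canonical map ℤ → R) and a ≡ b (mod J). Set V₀ = ((1+a)/2)·R^n, V₁ = ((1−a)/2)·R^n, V₀' = ((1+b)/2)·R^n, V₁' = ((1−b)/2)·R^n; these are free R-modules, and the rank of V₀' equals the rank of V₀ and the rank of V₁' equals the rank of V₁. -/
/-!
Let `φ` be the reduction modulo `J` on matrices; it reflects units. The element `u = 1 + b * a`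
satisfies `u * a = a + b = b * u`, and its reduction `1 + φ a * φ a = 2` is a unit, so `a` and `b`
are conjugate by `u`. Hence so are `(1 ± a) / 2` and `(1 ± b) / 2`, and `u` carries the range of
each projection isomorphically onto the range of its counterpart. The ranges are direct summands of
`R ^ n`, hence projective, hence free over the local ring `R`.
-/

section Involutions

variable {A : Type*}

theorem isConj_of_map_eq_of_mul_self_eq_one {B : Type*} [Semiring A] [Semiring B] (φ : A →+* B)
    [IsLocalHom φ] (h2 : IsUnit (2 : A)) {a b : A} (ha : a * a = 1) (hb : b * b = 1)
    (hab : φ a = φ b) : IsConj a b := by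
  have map_eq_two : φ (1 + b * a) = φ 2 := by
    rw [map_add, map_mul, ← hab, ← map_mul, ha, ← map_add, one_add_one_eq_two]
  have hu : IsUnit (1 + b * a) := .of_map φ _ (map_eq_two ▸ h2.map φ)
  have semiconj : (1 + b * a) * a = b * (1 + b * a) := by
    rw [add_mul, mul_add, mul_assoc, ha, ← mul_assoc, hb, one_mul, mul_one, add_comm]
  exact ⟨hu.unit, semiconj⟩

theorem isConj_neg [Monoid A] [HasDistribNeg A] {a b : A} (h : IsConj a b) : IsConj (-a) (-b) :=
  let ⟨u, hu⟩ := h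
  ⟨u, hu.neg_right⟩

theorem isConj_smul_one_add {R : Type*} [CommSemiring R] [Semiring A] [Algebra R A] (r : R)
    {a b : A} (h : IsConj a b) : IsConj (r • (1 + a)) (r • (1 + b)) :=
  let ⟨u, hu⟩ := h
  ⟨u, ((SemiconjBy.one_right _).add_right hu).smul_right r⟩

theorem isIdempotentElem_invOf_two_smul_one_add {R : Type*} [CommSemiring R]
    [Invertible (2 : R)] [Semiring A] [Algebra R A] {a : A} (ha : a * a = 1) :
    IsIdempotentElem (⅟(2 : R) • (1 + a)) := by
  have sq_eq : (1 + a) * (1 + a) = (2 : R) • (1 + a) := by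
    rw [add_mul, one_mul, mul_add, mul_one, ha, add_comm a 1, two_smul]
  rw [IsIdempotentElem, smul_mul_smul_comm, sq_eq, smul_smul, mul_assoc, invOf_mul_self, mul_one]

end Involutions

section Ranges

variable {R M : Type*}

theorem projective_range_of_isIdempotentElem [Semiring R] [AddCommMonoid M] [Module R M]
    [Module.Projective R M] {f : Module.End R M} (hf : IsIdempotentElem f) :
    Module.Projective R (LinearMap.range f) :=
  .of_split (LinearMap.range f).subtype f.rangeRestrict <|
    LinearMap.ext fun x => Subtype.ext ((LinearMap.IsIdempotentElem.mem_range_iff hf).1 x.2)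

theorem free_range_of_isIdempotentElem [CommRing R] [IsLocalRing R] [AddCommGroup M] [Module R M]
    [Module.Projective R M] [Module.Finite R M] {f : Module.End R M} (hf : IsIdempotentElem f) :
    Module.Free R (LinearMap.range f) :=
  have := projective_range_of_isIdempotentElem hf
  Module.free_of_flat_of_isLocalRing

theorem rank_range_eq_of_isConj [Semiring R] [AddCommMonoid M] [Module R M]
    {f g : Module.End R M} (h : IsConj f g) :
    Module.rank R (LinearMap.range f) = Module.rank R (LinearMap.range g) := by
  obtain ⟨u, hu⟩ := h
  let e : M ≃ₗ[R] M := LinearMap.GeneralLinearGroup.toLinearEquiv u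
  have semiconj : e.toLinearMap ∘ₗ f = g ∘ₗ e.toLinearMap := hu
  have map_range : (LinearMap.range f).map e.toLinearMap = LinearMap.range g := by
    rw [← LinearMap.range_comp, semiconj, LinearMap.range_comp_of_range_eq_top _ e.range]
  rw [← map_range]
  exact (e.submoduleMap (LinearMap.range f)).rank_eq

end Ranges

section Matrices

variable {R ι : Type*} [CommRing R] [Fintype ι]

theorem free_range_mulVecLin_of_isIdempotentElem [IsLocalRing R] {e : Matrix ι ι R}
    (he : IsIdempotentElem e) : Module.Free R (LinearMap.range e.mulVecLin) := by
  classical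
  exact free_range_of_isIdempotentElem (he.map Matrix.toLinAlgEquiv')

variable [DecidableEq ι]

theorem rank_range_mulVecLin_eq_of_isConj {e f : Matrix ι ι R} (h : IsConj e f) :
    Module.rank R (LinearMap.range e.mulVecLin) = Module.rank R (LinearMap.range f.mulVecLin) :=
  rank_range_eq_of_isConj ((Matrix.toLinAlgEquiv' : Matrix ι ι R ≃ₐ[R] _).toMonoidHom.map_isConj h)

theorem isLocalHom_mapMatrix {S : Type*} [CommRing S] (φ : R →+* S) [IsLocalHom φ] :
    IsLocalHom (φ.mapMatrix : Matrix ι ι R →+* Matrix ι ι S) where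
  map_nonunit a ha := by
    rw [Matrix.isUnit_iff_isUnit_det, ← RingHom.map_det] at ha
    exact (Matrix.isUnit_iff_isUnit_det a).2 (ha.of_map φ)

theorem mapMatrix_residue_eq_iff [IsLocalRing R] {a b : Matrix ι ι R} :
    (IsLocalRing.residue R).mapMatrix a = (IsLocalRing.residue R).mapMatrix b ↔
      ∀ i j, (a - b) i j ∈ IsLocalRing.maximalIdeal R := by
  simp only [← Matrix.ext_iff, RingHom.mapMatrix_apply, Matrix.map_apply, Matrix.sub_apply,
    ← IsLocalRing.residue_eq_zero_iff, map_sub, sub_eq_zero]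

theorem isConj_of_sub_mem_maximalIdeal_of_mul_self_eq_one [IsLocalRing R]
    (h2 : IsUnit (2 : R)) {a b : Matrix ι ι R} (ha : a * a = 1) (hb : b * b = 1)
    (hab : ∀ i j, (a - b) i j ∈ IsLocalRing.maximalIdeal R) : IsConj a b := by
  have := isLocalHom_mapMatrix (ι := ι) (IsLocalRing.residue R)
  have h2' : IsUnit (2 : Matrix ι ι R) := by
    simpa only [map_ofNat] using h2.map (algebraMap R (Matrix ι ι R))
  exact isConj_of_map_eq_of_mul_self_eq_one (IsLocalRing.residue R).mapMatrix h2' ha hb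
    (mapMatrix_residue_eq_iff.2 hab)

end Matrices

theorem stmt2_general {R ι : Type*} [CommRing R] [IsLocalRing R] [Invertible (2 : R)]
    [Fintype ι] [DecidableEq ι] (a b : Matrix ι ι R) (ha : a * a = 1) (hb : b * b = 1)
    (hab : ∀ i j, (a - b) i j ∈ IsLocalRing.maximalIdeal R) :
    let V0 := LinearMap.range (⅟(2 : R) • ((1 : Matrix ι ι R) + a)).mulVecLin
    let V1 := LinearMap.range (⅟(2 : R) • ((1 : Matrix ι ι R) - a)).mulVecLin
    let V0' := LinearMap.range (⅟(2 : R) • ((1 : Matrix ι ι R) + b)).mulVecLin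
    let V1' := LinearMap.range (⅟(2 : R) • ((1 : Matrix ι ι R) - b)).mulVecLin
    Module.Free R V0 ∧ Module.Free R V1 ∧ Module.Free R V0' ∧ Module.Free R V1' ∧
    Module.rank R V0' = Module.rank R V0 ∧ Module.rank R V1' = Module.rank R V1 := by
  have free {c : Matrix ι ι R} (hc : c * c = 1) :
      Module.Free R (LinearMap.range (⅟(2 : R) • (1 + c)).mulVecLin) :=
    free_range_mulVecLin_of_isIdempotentElem (isIdempotentElem_invOf_two_smul_one_add hc)
  have rank_eq {c d : Matrix ι ι R} (hcd : IsConj c d) :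
      Module.rank R (LinearMap.range (⅟(2 : R) • (1 + d)).mulVecLin) =
        Module.rank R (LinearMap.range (⅟(2 : R) • (1 + c)).mulVecLin) :=
    (rank_range_mulVecLin_eq_of_isConj (isConj_smul_one_add _ hcd)).symm
  have conj : IsConj a b :=
    isConj_of_sub_mem_maximalIdeal_of_mul_self_eq_one (isUnit_of_invertible 2) ha hb hab
  have ha' : -a * -a = 1 := by rw [neg_mul_neg, ha]
  have hb' : -b * -b = 1 := by rw [neg_mul_neg, hb]
  rw [sub_eq_add_neg 1 a, sub_eq_add_neg 1 b]
  exact ⟨free ha, free ha', free hb, free hb', rank_eq conj, rank_eq (isConj_neg conj)⟩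

/-- Let `a, b` be `n × n` matrices over a commutative local ring `R`
(with `2` invertible, maximal ideal `J`) with `a² = b² = 1`, all entries of `a` in the
prime subring of `R` (the image of `ℤ → R`), and `a ≡ b (mod J)`.  Set
`V₀ = ((1+a)/2)·R^n`, `V₁ = ((1-a)/2)·R^n`, `V₀' = ((1+b)/2)·R^n`, `V₁' = ((1-b)/2)·R^n`.
These are free `R`-modules, the rank of `V₀'` equals the rank of `V₀`, and the rank of
`V₁'` equals the rank of `V₁`. -/
theorem stmt2 {R : Type*} [CommRing R] [IsLocalRing R] [Invertible (2 : R)]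
    {n : ℕ} (a b : Matrix (Fin n) (Fin n) R) (ha : a * a = 1) (hb : b * b = 1)
    (haZ : ∀ i j, a i j ∈ Set.range (Int.cast : ℤ → R))
    (hab : ∀ i j, (a - b) i j ∈ IsLocalRing.maximalIdeal R) :
    let V0 := LinearMap.range (⅟(2 : R) • ((1 : Matrix (Fin n) (Fin n) R) + a)).mulVecLin
    let V1 := LinearMap.range (⅟(2 : R) • ((1 : Matrix (Fin n) (Fin n) R) - a)).mulVecLin
    let V0' := LinearMap.range (⅟(2 : R) • ((1 : Matrix (Fin n) (Fin n) R) + b)).mulVecLin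
    let V1' := LinearMap.range (⅟(2 : R) • ((1 : Matrix (Fin n) (Fin n) R) - b)).mulVecLin
    Module.Free R V0 ∧ Module.Free R V1 ∧ Module.Free R V0' ∧ Module.Free R V1' ∧
    Module.rank R V0' = Module.rank R V0 ∧ Module.rank R V1' = Module.rank R V1 := by
  exact stmt2_general a b ha hb hab
end

section
/- Let d₁, …, d_r be diagonal n×n matrices over R each of whose diagonal entries is 1 or −1, and let a₁, …, a_r be pairwise commuting n×n matrices over R with aᵢ² = 1 and aᵢ ≡ dᵢ (mod J) for each i. Then there exists g ∈ GL_n(R) with g ≡ 1 (mod J) such that g·aᵢ·g⁻¹ = dᵢ for every i = 1, …, r. -/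
open Matrix

/-!
If two homomorphisms `ρ, σ` from a finite group `G` to the units of a ring agree modulo an ideal
contained in the Jacobson radical and `|G|` is invertible, then averaging `ρ(x) σ(x)⁻¹` over `G`
gives an intertwiner congruent to `1`, hence a unit conjugating `σ` to `ρ`. For commuting families
`d` and `a` of elements whose `m`-th powers are `1`, take `G` to be the group generated by the
pairs `(dᵢ, aᵢ)` and `ρ, σ` its two projections: the order of `G` divides a power of `m`.
-/

section CommutingGenerators

variable {G : Type*} [Group G] {s : Set G} {m : ℕ}

theorem pow_eq_one_of_mem_closure (hcomm : ∀ x ∈ s, ∀ y ∈ s, x * y = y * x)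
    (hpow : ∀ x ∈ s, x ^ m = 1) {x : G} (hx : x ∈ Subgroup.closure s) : x ^ m = 1 := by
  have := Subgroup.isMulCommutative_closure hcomm
  induction hx using Subgroup.closure_induction with
  | mem x hx => exact hpow x hx
  | one => exact one_pow m
  | mul x y hx hy hxm hym =>
    have hxy : Commute x y := setLike_mul_comm hx hy
    rw [hxy.mul_pow, hxm, hym, one_mul]
  | inv x _ hxm => rw [inv_pow, hxm, inv_one]

open scoped IsMulCommutative in
theorem exists_card_closure_dvd_pow [Finite s] (hcomm : ∀ x ∈ s, ∀ y ∈ s, x * y = y * x)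
    (hpow : ∀ x ∈ s, x ^ m = 1) : ∃ k, Nat.card (Subgroup.closure s) ∣ m ^ k := by
  have := Subgroup.isMulCommutative_closure hcomm
  exact ⟨_, card_dvd_exponent_pow_rank' _ fun x =>
    Subtype.ext (pow_eq_one_of_mem_closure hcomm hpow x.2)⟩

end CommutingGenerators

theorem isUnit_natCast_of_dvd {A : Type*} [Semiring A] {k l : ℕ} (hkl : k ∣ l)
    (hl : IsUnit (l : A)) : IsUnit (k : A) := by
  obtain ⟨c, rfl⟩ := hkl
  rw [Nat.cast_mul] at hl
  exact ((Nat.cast_commute k (c : A)).isUnit_mul_iff.mp hl).1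

section Intertwiner

variable {G A B : Type*} [Group G] [Semiring A] [Semiring B]

/-- The sum over a finite group `G` of `ρ x * σ x⁻¹`, which intertwines the representations `ρ` and
`σ` of `G` in a semiring. It is not divided by the order of `G`, which need not be invertible. -/
def sumIntertwiner [Fintype G] (ρ σ : G →* A) : A := ∑ x, ρ x * σ x⁻¹

theorem mul_sumIntertwiner [Fintype G] (ρ σ : G →* A) (y : G) :
    ρ y * sumIntertwiner ρ σ = sumIntertwiner ρ σ * σ y := by
  rw [sumIntertwiner, Finset.mul_sum, Finset.sum_mul]
  refine Fintype.sum_equiv (Equiv.mulLeft y) _ _ fun x => ?_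
  calc ρ y * (ρ x * σ x⁻¹) = ρ (y * x) * σ ((y * x)⁻¹ * y) := by
        rw [← mul_assoc, ← map_mul, _root_.mul_inv_rev, inv_mul_cancel_right]
    _ = ρ (y * x) * σ (y * x)⁻¹ * σ y := by rw [map_mul σ, mul_assoc]

theorem map_sumIntertwiner [Fintype G] (f : A →+* B) {ρ σ : G →* A}
    (h : ∀ x, f (ρ x) = f (σ x)) : f (sumIntertwiner ρ σ) = Nat.card G := by
  have hterm (x : G) : f (ρ x * σ x⁻¹) = 1 := by
    rw [map_mul, h, ← map_mul, ← map_mul, mul_inv_cancel, map_one, map_one]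
  simp only [sumIntertwiner, map_sum, hterm, Finset.sum_const, Finset.card_univ, nsmul_one,
    Nat.card_eq_fintype_card]

theorem exists_units_intertwining [Finite G] (f : A →+* B) [IsLocalHom f]
    (hG : IsUnit (Nat.card G : A)) {ρ σ : G →* A} (h : ∀ x, f (ρ x) = f (σ x)) :
    ∃ g : Aˣ, f g = 1 ∧ ∀ x, ρ x * g = g * σ x := by
  have := Fintype.ofFinite G
  obtain ⟨c, hc⟩ := hG
  have hf : f (↑c⁻¹ * sumIntertwiner ρ σ) = 1 := by
    rw [map_mul, map_sumIntertwiner f h, ← map_natCast f, ← hc, ← map_mul, c.inv_mul, map_one]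
  obtain ⟨g, hg⟩ : IsUnit (↑c⁻¹ * sumIntertwiner ρ σ) :=
    isUnit_of_map_unit f _ (hf ▸ isUnit_one)
  refine ⟨g, hg ▸ hf, fun x => ?_⟩
  have hcx : Commute (ρ x) ↑c⁻¹ := Commute.units_inv_right (hc ▸ Nat.commute_cast (ρ x) _)
  rw [hg, ← mul_assoc, hcx.eq, mul_assoc, mul_sumIntertwiner, mul_assoc]

end Intertwiner

section CommutingFamilies

variable {A B ι : Type*} [Semiring A] [Semiring B] [Finite ι] {m : ℕ} [NeZero m]

theorem exists_units_mul_eq_mul_of_commute_of_pow_eq_one (f : A →+* B) [IsLocalHom f]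
    (hm : IsUnit (m : A)) {d a : ι → Aˣ} (hd_comm : ∀ i j, Commute (d i) (d j))
    (ha_comm : ∀ i j, Commute (a i) (a j)) (hd_pow : ∀ i, d i ^ m = 1)
    (ha_pow : ∀ i, a i ^ m = 1) (hda : ∀ i, f (d i) = f (a i)) :
    ∃ g : Aˣ, f g = 1 ∧ ∀ i, d i * g = g * a i := by
  let G := Subgroup.closure (Set.range fun i => (d i, a i))
  obtain ⟨k, hk⟩ : ∃ k, Nat.card G ∣ m ^ k := by
    refine exists_card_closure_dvd_pow ?_ ?_
    · rintro _ ⟨i, rfl⟩ _ ⟨j, rfl⟩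
      exact Prod.ext (hd_comm i j) (ha_comm i j)
    · rintro _ ⟨i, rfl⟩
      exact Prod.ext (hd_pow i) (ha_pow i)
  have : Finite G :=
    Nat.finite_of_card_ne_zero (ne_zero_of_dvd_ne_zero (pow_ne_zero k (NeZero.ne m)) hk)
  have hG : IsUnit (Nat.card G : A) :=
    isUnit_natCast_of_dvd hk (by rw [Nat.cast_pow]; exact hm.pow k)
  let ρ : G →* A := (Units.coeHom A).comp ((MonoidHom.fst Aˣ Aˣ).comp G.subtype)
  let σ : G →* A := (Units.coeHom A).comp ((MonoidHom.snd Aˣ Aˣ).comp G.subtype)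
  have hρσ (x : G) : f (ρ x) = f (σ x) := by
    have hle : G ≤ ((Units.map (f : A →* B)).comp (MonoidHom.fst Aˣ Aˣ)).eqLocus
        ((Units.map (f : A →* B)).comp (MonoidHom.snd Aˣ Aˣ)) := by
      rw [Subgroup.closure_le]
      rintro _ ⟨i, rfl⟩
      exact Units.ext (hda i)
    exact congrArg Units.val (hle x.2)
  obtain ⟨g, hg, hgx⟩ := exists_units_intertwining f hG hρσ
  exact ⟨g, hg, fun i => Units.ext (hgx ⟨(d i, a i), Subgroup.subset_closure ⟨i, rfl⟩⟩)⟩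

theorem exists_units_conj_eq_of_commute_of_pow_eq_one (f : A →+* B) [IsLocalHom f]
    (hm : IsUnit (m : A)) {d a : ι → A} (hd_comm : ∀ i j, Commute (d i) (d j))
    (ha_comm : ∀ i j, Commute (a i) (a j)) (hd_pow : ∀ i, d i ^ m = 1)
    (ha_pow : ∀ i, a i ^ m = 1) (hda : ∀ i, f (d i) = f (a i)) :
    ∃ g : Aˣ, f g = 1 ∧ ∀ i, g * a i * ↑g⁻¹ = d i := by
  obtain ⟨g, hg, hconj⟩ := exists_units_mul_eq_mul_of_commute_of_pow_eq_one f hm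
    (d := fun i => Units.ofPowEqOne (d i) m (hd_pow i) (NeZero.ne m))
    (a := fun i => Units.ofPowEqOne (a i) m (ha_pow i) (NeZero.ne m))
    (fun i j => Units.ext (hd_comm i j)) (fun i j => Units.ext (ha_comm i j))
    (fun i => Units.pow_ofPowEqOne (hd_pow i) (NeZero.ne m))
    (fun i => Units.pow_ofPowEqOne (ha_pow i) (NeZero.ne m)) hda
  refine ⟨g, hg, fun i => ?_⟩
  have hgi : d i * g = g * a i := congrArg Units.val (hconj i)
  rw [← hgi, Units.mul_inv_cancel_right]

end CommutingFamilies

section Matrix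

variable {n R : Type*} [Fintype n] [DecidableEq n] [CommRing R]

theorem isLocalHom_mapMatrix_s3 {S : Type*} [CommRing S] (f : R →+* S) [IsLocalHom f] :
    IsLocalHom (f.mapMatrix : Matrix n n R →+* Matrix n n S) where
  map_nonunit M hM := by
    rw [Matrix.isUnit_iff_isUnit_det, ← RingHom.map_det] at hM
    exact (Matrix.isUnit_iff_isUnit_det M).mpr (isUnit_of_map_unit f _ hM)

theorem mapMatrix_mk_eq_iff {J : Ideal R} {M N : Matrix n n R} :
    (Ideal.Quotient.mk J).mapMatrix M = (Ideal.Quotient.mk J).mapMatrix N ↔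
      ∀ p q, (M - N) p q ∈ J := by
  simp only [← Matrix.ext_iff, RingHom.mapMatrix_apply, Matrix.map_apply, Matrix.sub_apply,
    Ideal.Quotient.mk_eq_mk_iff_sub_mem]

theorem stmt3_general {ι : Type*} [Finite ι] {J : Ideal R} (hJ : J ≤ Ideal.jacobson ⊥)
    {m : ℕ} [NeZero m] (hm : IsUnit (m : R)) (d a : ι → Matrix n n R)
    (hd_comm : ∀ i j, Commute (d i) (d j)) (ha_comm : ∀ i j, Commute (a i) (a j))
    (hd_pow : ∀ i, d i ^ m = 1) (ha_pow : ∀ i, a i ^ m = 1)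
    (hmod : ∀ i p q, (a i - d i) p q ∈ J) :
    ∃ g : GL n R, (∀ p q, ((g : Matrix n n R) - 1) p q ∈ J) ∧
      ∀ i, (g : Matrix n n R) * a i * ((g⁻¹ : GL n R) : Matrix n n R) = d i := by
  have := isLocalHom_of_le_jacobson_bot J hJ
  have := isLocalHom_mapMatrix_s3 (n := n) (Ideal.Quotient.mk J)
  have hm' : IsUnit (m : Matrix n n R) := by
    simpa only [map_natCast] using hm.map (algebraMap R (Matrix n n R))
  obtain ⟨g, hg, hconj⟩ := exists_units_conj_eq_of_commute_of_pow_eq_one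
    (Ideal.Quotient.mk J).mapMatrix hm' hd_comm ha_comm hd_pow ha_pow
    fun i => (mapMatrix_mk_eq_iff.mpr (hmod i)).symm
  exact ⟨g, mapMatrix_mk_eq_iff.mp (hg.trans (map_one _).symm), hconj⟩

end Matrix

/-- Let `d₁, …, d_r` be diagonal `n × n` matrices over a commutative
local ring `R` (with `2` invertible, maximal ideal `J`), each diagonal entry being `1`
or `-1`, and let `a₁, …, a_r` be pairwise commuting `n × n` matrices over `R` with
`aᵢ² = 1` and `aᵢ ≡ dᵢ (mod J)`.  Then there is `g ∈ GL_n(R)` with `g ≡ 1 (mod J)`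
such that `g·aᵢ·g⁻¹ = dᵢ` for every `i`. -/
theorem stmt3 {R : Type*} [CommRing R] [IsLocalRing R] [Invertible (2 : R)]
    {n r : ℕ} (δ : Fin r → Fin n → R)
    (hδ : ∀ i j, δ i j = 1 ∨ δ i j = -1)
    (a : Fin r → Matrix (Fin n) (Fin n) R)
    (hcomm : ∀ i j, a i * a j = a j * a i)
    (hsq : ∀ i, a i * a i = 1)
    (hmod : ∀ i p q, (a i - Matrix.diagonal (δ i)) p q ∈ IsLocalRing.maximalIdeal R) :
    ∃ g : GL (Fin n) R,
      (∀ p q, ((g : Matrix (Fin n) (Fin n) R) - 1) p q ∈ IsLocalRing.maximalIdeal R) ∧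
      ∀ i, (g : Matrix (Fin n) (Fin n) R) * a i * ((g⁻¹ : GL (Fin n) R) : Matrix (Fin n) (Fin n) R)
        = Matrix.diagonal (δ i) := by
  have hd_sq (i : Fin r) : Matrix.diagonal (δ i) ^ 2 = 1 := by
    rw [Matrix.diagonal_pow, ← Matrix.diagonal_one]
    exact congrArg _ (funext fun j => by rcases hδ i j with h | h <;> simp [h])
  exact stmt3_general (IsLocalRing.maximalIdeal_le_jacobson ⊥) (isUnit_of_invertible 2)
    (fun i => Matrix.diagonal (δ i)) a (fun i j => Matrix.commute_diagonal _ _) hcomm hd_sq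
    (fun i => (sq (a i)).trans (hsq i)) hmod
end

section
/- Let a, b be n×n matrices over R with a² = b² = 1 and a ≠ b. Set V₀^a = ((1+a)/2)·R^n, V₁^a = ((1−a)/2)·R^n, and similarly V₀^b, V₁^b for b, and assume the submodules V₁^a and V₁^b are free of rank 1. Then ab = ba if and only if V₁^a ⊆ V₀^b and V₁^b ⊆ V₀^a. -/
/-!
An involution `f` is determined by the idempotent `(1 - f) / 2`, its projection onto `V₁` along
`V₀`, so it suffices to compare two distinct idempotents `p` and `q` whose ranges are free of
rank one. If they commute, then `q` acts on `range p` by an idempotent scalar, which is `0` or `1`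
because a local ring has no other idempotents, and likewise with the roles exchanged. If either of
them kills the range of the other, then `p * q = q * p = 0`; otherwise each range contains the
other, which forces `p = q`.
-/

open LinearMap Module

section NegProj

variable (R : Type*) {A : Type*} [CommRing R] [Invertible (2 : R)] [Ring A] [Algebra R A]

/-- The element `(1 - a) / 2` of an algebra. When `a` is an endomorphism with `a * a = 1`, it is the
projection onto the `(-1)`-eigenspace of `a` along the `1`-eigenspace. -/
def negProj (a : A) : A :=
  ⅟(2 : R) • (1 - a)

theorem one_sub_two_smul_negProj (a : A) : 1 - (2 : R) • negProj R a = a := by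
  rw [negProj, smul_invOf_smul, sub_sub_cancel]

theorem one_sub_negProj (a : A) : 1 - negProj R a = ⅟(2 : R) • (1 + a) :=
  calc
    1 - negProj R a = ⅟(2 : R) • ((2 : R) • 1 - (1 - a)) := by
      rw [smul_sub, invOf_smul_smul, negProj]
    _ = ⅟(2 : R) • (1 + a) := by
      rw [two_smul, add_sub_assoc, sub_sub_cancel]

theorem negProj_injective : Function.Injective (negProj R : A → A) :=
  Function.LeftInverse.injective (g := fun p => 1 - (2 : R) • p) (one_sub_two_smul_negProj R)

variable {R}

theorem isIdempotentElem_negProj {a : A} (ha : a * a = 1) : IsIdempotentElem (negProj R a) := by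
  have hmul : negProj R a * (1 - negProj R a) = 0 := by
    rw [one_sub_negProj, negProj, smul_mul_smul_comm, sub_mul, one_mul, mul_add, ha, mul_one,
      add_comm, sub_self, smul_zero]
  rwa [mul_sub, mul_one, sub_eq_zero, eq_comm] at hmul

theorem commute_negProj_iff {a b : A} : Commute (negProj R a) (negProj R b) ↔ Commute a b := by
  constructor
  · intro h
    rw [← one_sub_two_smul_negProj R a, ← one_sub_two_smul_negProj R b]
    exact .sub_left (.one_left _) (.sub_right (.one_right _) ((h.smul_left 2).smul_right 2))
  · intro h
    have hsub : Commute (1 - a) (1 - b) :=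
      .sub_left (.one_left _) (.sub_right (.one_right _) h)
    exact (hsub.smul_left _).smul_right _

end NegProj

theorem eq_zero_or_eq_one_of_isIdempotentElem_of_isLocalRing {R : Type*} [Ring R] [IsLocalRing R]
    {c : R} (hc : IsIdempotentElem c) : c = 0 ∨ c = 1 := by
  rcases IsLocalRing.isUnit_or_isUnit_of_add_one (add_sub_cancel c 1) with hunit | hunit
  · exact Or.inr ((IsIdempotentElem.iff_eq_one_of_isUnit hunit).mp hc)
  · exact Or.inl (sub_eq_self.mp ((IsIdempotentElem.iff_eq_one_of_isUnit hunit).mp hc.one_sub))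

section RankOne

variable {R M : Type*} [CommSemiring R] [StrongRankCondition R] [AddCommMonoid M] [Module R M]

theorem eq_zero_or_eq_one_of_isIdempotentElem_of_finrank_eq_one [Free R M]
    (hR : ∀ c : R, IsIdempotentElem c → c = 0 ∨ c = 1) (hM : finrank R M = 1)
    {e : End R M} (he : IsIdempotentElem e) : e = 0 ∨ e = 1 := by
  obtain ⟨c, hc : e = c • 1, hunique⟩ := e.existsUnique_eq_smul_id_of_finrank_eq_one hM
  have hee : e = (c * c) • 1 := by rw [← he.eq, hc, smul_mul_smul_comm, one_mul]
  rcases hR c (hunique (c * c) hee) with rfl | rfl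
  · exact Or.inl (by rw [hc, zero_smul])
  · exact Or.inr (by rw [hc, one_smul])

theorem le_ker_or_le_range_of_finrank_eq_one
    (hR : ∀ c : R, IsIdempotentElem c → c = 0 ∨ c = 1) {U : Submodule R M} [Free R U]
    (hU : finrank R U = 1) {q : End R M} (hq : IsIdempotentElem q)
    (hUq : U ∈ End.invtSubmodule q) : U ≤ ker q ∨ U ≤ range q := by
  have hrestrict : IsIdempotentElem (q.restrict hUq) := by
    ext x
    exact congr($hq x)
  rcases eq_zero_or_eq_one_of_isIdempotentElem_of_finrank_eq_one hR hU hrestrict with hzero | hone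
  · exact Or.inl fun x hx => congr(($hzero ⟨x, hx⟩ : M))
  · exact Or.inr fun x hx => ⟨x, congr(($hone ⟨x, hx⟩ : M))⟩

end RankOne

section CommutingEndomorphisms

variable {R M : Type*} [Semiring R] [AddCommMonoid M] [Module R M] {p q : End R M}

theorem eq_of_commute_of_range_le_range (hp : IsIdempotentElem p) (hq : IsIdempotentElem q)
    (hpq : Commute p q) (hle : range p ≤ range q) (hge : range q ≤ range p) : p = q :=
  calc
    p = q * p := ((hq.comp_eq_right_iff p).mpr hle).symm
    _ = p * q := hpq.symm
    _ = q := (hp.comp_eq_right_iff q).mpr hge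

theorem commute_of_range_le_ker (hpq : range p ≤ ker q) (hqp : range q ≤ ker p) :
    Commute p q :=
  (range_le_ker_iff.mp hqp).trans (range_le_ker_iff.mp hpq).symm

theorem range_le_ker_comm (hpq : Commute p q) : range p ≤ ker q ↔ range q ≤ ker p := by
  rw [range_le_ker_iff, range_le_ker_iff, ← End.mul_eq_comp, ← End.mul_eq_comp, hpq.eq]

end CommutingEndomorphisms

theorem commute_iff_range_le_ker_of_finrank_eq_one {R M : Type*} [CommRing R]
    [AddCommGroup M] [Module R M] (hR : ∀ c : R, IsIdempotentElem c → c = 0 ∨ c = 1) {p q : End R M}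
    (hp : IsIdempotentElem p) (hq : IsIdempotentElem q) (hne : p ≠ q)
    (hp_free : Free R (range p)) (hp_rank : finrank R (range p) = 1)
    (hq_free : Free R (range q)) (hq_rank : finrank R (range q) = 1) :
    Commute p q ↔ range p ≤ ker q ∧ range q ≤ ker p := by
  refine ⟨fun hpq => ?_, fun h => commute_of_range_le_ker h.1 h.2⟩
  have : Nontrivial (End R M) := ⟨p, q, hne⟩
  have : Nontrivial R := Module.nontrivial R (End R M)
  have hp_or : range p ≤ ker q ∨ range p ≤ range q :=
    le_ker_or_le_range_of_finrank_eq_one hR hp_rank hq (hp.commute_iff.mp hpq).1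
  have hq_or : range q ≤ ker p ∨ range q ≤ range p :=
    le_ker_or_le_range_of_finrank_eq_one hR hq_rank hp (hq.commute_iff.mp hpq.symm).1
  rcases hp_or with hker | hle
  · exact ⟨hker, (range_le_ker_comm hpq).mp hker⟩
  rcases hq_or with hker | hge
  · exact ⟨(range_le_ker_comm hpq).mpr hker, hker⟩
  exact absurd (eq_of_commute_of_range_le_range hp hq hpq hle hge) hne

theorem stmt4_general {R M : Type*} [CommRing R] [Invertible (2 : R)] [AddCommGroup M] [Module R M]
    (hR : ∀ c : R, IsIdempotentElem c → c = 0 ∨ c = 1) {f g : End R M}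
    (hf : f * f = 1) (hg : g * g = 1) (hne : f ≠ g)
    (hf_free : Free R (range (⅟(2 : R) • (1 - f))))
    (hf_rank : finrank R (range (⅟(2 : R) • (1 - f))) = 1)
    (hg_free : Free R (range (⅟(2 : R) • (1 - g))))
    (hg_rank : finrank R (range (⅟(2 : R) • (1 - g))) = 1) :
    Commute f g ↔
      range (⅟(2 : R) • (1 - f)) ≤ range (⅟(2 : R) • (1 + g)) ∧
        range (⅟(2 : R) • (1 - g)) ≤ range (⅟(2 : R) • (1 + f)) := by
  have hf_idem : IsIdempotentElem (negProj R f) := isIdempotentElem_negProj hf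
  have hg_idem : IsIdempotentElem (negProj R g) := isIdempotentElem_negProj hg
  rw [← one_sub_negProj, ← one_sub_negProj, ← hf_idem.ker_eq_range_one_sub,
    ← hg_idem.ker_eq_range_one_sub, ← commute_negProj_iff (R := R)]
  exact commute_iff_range_le_ker_of_finrank_eq_one hR hf_idem hg_idem
    ((negProj_injective R).ne hne) hf_free hf_rank hg_free hg_rank

theorem mulVecLin_eq_toLinAlgEquiv' {R n : Type*} [CommSemiring R] [Fintype n] [DecidableEq n]
    (a : Matrix n n R) : a.mulVecLin = Matrix.toLinAlgEquiv' a :=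
  rfl

/-- Let `a, b` be `n × n` matrices over a commutative local ring `R`
(with `2` invertible) with `a² = b² = 1` and `a ≠ b`.  Set `V₀ᵃ = ((1+a)/2)·R^n`,
`V₁ᵃ = ((1-a)/2)·R^n`, and similarly for `b`, and assume `V₁ᵃ` and `V₁ᵇ` are free of
rank `1`.  Then `ab = ba` if and only if `V₁ᵃ ⊆ V₀ᵇ` and `V₁ᵇ ⊆ V₀ᵃ`. -/
theorem stmt4 {R : Type*} [CommRing R] [IsLocalRing R] [Invertible (2 : R)]
    {n : ℕ} (a b : Matrix (Fin n) (Fin n) R) (ha : a * a = 1) (hb : b * b = 1)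
    (hab : a ≠ b)
    (V0a V1a V0b V1b : Submodule R (Fin n → R))
    (hV0a : V0a = LinearMap.range (⅟(2 : R) • ((1 : Matrix (Fin n) (Fin n) R) + a)).mulVecLin)
    (hV1a : V1a = LinearMap.range (⅟(2 : R) • ((1 : Matrix (Fin n) (Fin n) R) - a)).mulVecLin)
    (hV0b : V0b = LinearMap.range (⅟(2 : R) • ((1 : Matrix (Fin n) (Fin n) R) + b)).mulVecLin)
    (hV1b : V1b = LinearMap.range (⅟(2 : R) • ((1 : Matrix (Fin n) (Fin n) R) - b)).mulVecLin)
    (hV1afree : Module.Free R V1a) (hV1arank : Module.rank R V1a = 1)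
    (hV1bfree : Module.Free R V1b) (hV1brank : Module.rank R V1b = 1) :
    a * b = b * a ↔ (V1a ≤ V0b ∧ V1b ≤ V0a) := by
  simp only [mulVecLin_eq_toLinAlgEquiv', map_smul, map_add, map_sub, map_one]
    at hV0a hV1a hV0b hV1b
  subst hV0a hV1a hV0b hV1b
  rw [Module.rank_eq_one_iff_finrank_eq_one] at hV1arank hV1brank
  rw [← commute_iff_eq, ← commute_map_iff Matrix.toLinAlgEquiv'.injective]
  exact stmt4_general (fun _ => eq_zero_or_eq_one_of_isIdempotentElem_of_isLocalRing)
    (by rw [← map_mul, ha, map_one]) (by rw [← map_mul, hb, map_one])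
    (Matrix.toLinAlgEquiv'.injective.ne hab) hV1afree hV1arank hV1bfree hV1brank
end

section
/- Let l ≥ 2 and let a be an l×l matrix over R with a² = 1 such that the submodule V₁ = ((1−a)/2)·R^l is free of rank 1. Then there exists g ∈ GL_l(R) such that g·a·g⁻¹ = M, where M is the l×l matrix equal to the identity matrix except that M₁₁ = −1 and M₁₂ = 1. -/
open Matrix

/-!
An involution `a` is `1 - 2p` for the idempotent `p = (1 - a)/2`, so conjugating involutions amounts
to conjugating idempotents. An idempotent splits the module as `range ⊕ ker`, and over a local ring
both summands are free; hence two idempotents of the same rank are conjugate. The target matrix is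
`1 - 2 u wᵀ` with `w ⬝ u = 1`, and `u wᵀ` is an idempotent of rank one.
-/

section Involution

variable {R A : Type*} [Ring A]

theorem isConj_one_sub_smul [Monoid R] [DistribMulAction R A] [IsScalarTower R A A]
    [SMulCommClass R A A] {p q : A} (r : R) (h : IsConj p q) :
    IsConj (1 - r • p) (1 - r • q) := by
  obtain ⟨g, hg⟩ := h
  exact ⟨g, (SemiconjBy.one_right _).sub_right (hg.smul_right r)⟩

variable [CommSemiring R] [Invertible (2 : R)] [Algebra R A]

theorem isIdempotentElem_invOf_two_smul_one_sub {a : A} (ha : a * a = 1) :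
    IsIdempotentElem (⅟(2 : R) • (1 - a)) := by
  have hsq : (1 - a) * (1 - a) = (2 : R) • (1 - a) := by
    rw [two_smul, mul_sub, sub_mul, sub_mul, ha]
    noncomm_ring
  rw [IsIdempotentElem, smul_mul_smul_comm, hsq, smul_smul, mul_assoc, invOf_mul_self, mul_one]

end Involution

section Projection

open LinearMap Module

variable {R M : Type*} [AddCommGroup M]

theorem isConj_of_isIdempotentElem_of_range_equiv_of_ker_equiv [Ring R] [Module R M]
    {p q : Module.End R M} (hp : IsIdempotentElem p) (hq : IsIdempotentElem q)
    (e : range p ≃ₗ[R] range q) (e' : ker p ≃ₗ[R] ker q) : IsConj p q := by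
  let φ := Submodule.prodEquivOfIsCompl _ _ (IsIdempotentElem.isCompl hp)
  let ψ := Submodule.prodEquivOfIsCompl _ _ (IsIdempotentElem.isCompl hq)
  let g : M ≃ₗ[R] M := φ.symm ≪≫ₗ e.prodCongr e' ≪≫ₗ ψ
  refine ⟨LinearMap.GeneralLinearGroup.ofLinearEquiv g, LinearMap.ext fun x => ?_⟩
  change g (p x) = q (g x)
  obtain ⟨⟨y, z⟩, rfl⟩ := φ.surjective x
  have hpφ : p (φ (y, z)) = φ (y, 0) := by
    simp [φ, (IsIdempotentElem.mem_range_iff hp).1 y.2]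
  have hqψ : q (ψ (e y, e' z)) = ψ (e y, 0) := by
    simp [ψ, (IsIdempotentElem.mem_range_iff hq).1 (e y).2]
  simp [g, hpφ, hqψ]

variable [CommRing R] [IsLocalRing R] [Module R M] [Module.Finite R M] [Module.Projective R M]
  {p q : Module.End R M}

theorem free_range_of_isIdempotentElem_s5 (hp : IsIdempotentElem p) :
    Module.Free R (range p) := by
  have : Module.Projective R (range p) :=
    .of_split (range p).subtype p.rangeRestrict <| LinearMap.ext fun x =>
      Subtype.ext ((IsIdempotentElem.mem_range_iff hp).1 x.2)
  exact Module.free_of_flat_of_isLocalRing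

theorem finrank_range_add_finrank_range_one_sub_of_isIdempotentElem (hp : IsIdempotentElem p) :
    finrank R (range p) + finrank R (range (1 - p)) = finrank R M := by
  have := free_range_of_isIdempotentElem_s5 hp
  have := free_range_of_isIdempotentElem_s5 hp.one_sub
  have hcompl : IsCompl (range p) (range (1 - p)) :=
    IsIdempotentElem.ker_eq_range_one_sub hp ▸ IsIdempotentElem.isCompl hp
  rw [← finrank_prod, (Submodule.prodEquivOfIsCompl _ _ hcompl).finrank_eq]

theorem isConj_of_isIdempotentElem_of_finrank_range_eq (hp : IsIdempotentElem p)
    (hq : IsIdempotentElem q) (h : finrank R (range p) = finrank R (range q)) : IsConj p q := by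
  have := free_range_of_isIdempotentElem_s5 hp
  have := free_range_of_isIdempotentElem_s5 hq
  have := free_range_of_isIdempotentElem_s5 hp.one_sub
  have := free_range_of_isIdempotentElem_s5 hq.one_sub
  have h' : finrank R (range (1 - p)) = finrank R (range (1 - q)) := by
    have hadd_p := finrank_range_add_finrank_range_one_sub_of_isIdempotentElem hp
    have hadd_q := finrank_range_add_finrank_range_one_sub_of_isIdempotentElem hq
    omega
  refine isConj_of_isIdempotentElem_of_range_equiv_of_ker_equiv hp hq (.ofFinrankEq _ _ h) ?_
  rw [IsIdempotentElem.ker_eq_range_one_sub hp,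
    IsIdempotentElem.ker_eq_range_one_sub hq]
  exact .ofFinrankEq _ _ h'

end Projection

section VecMulVec

variable {R n : Type*}

theorem isIdempotentElem_vecMulVec [Semiring R] [Fintype n] {u w : n → R} (h : w ⬝ᵥ u = 1) :
    IsIdempotentElem (vecMulVec u w) := by
  rw [IsIdempotentElem, vecMulVec_mul_vecMulVec, h, one_smul]

theorem rank_vecMulVec_eq_one [CommSemiring R] [StrongRankCondition R] [Fintype n] {u w : n → R}
    (h : w ⬝ᵥ u = 1) : (vecMulVec u w).rank = 1 := by
  refine le_antisymm (rank_vecMulVec_le u w) ?_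
  have hrow : replicateRow Unit w * vecMulVec u w = replicateRow Unit w := by
    rw [← replicateRow_vecMul, vecMul_vecMulVec, h, one_smul]
  have hone : replicateRow Unit w * replicateCol Unit u = 1 := by
    ext
    simp [h]
  calc 1 = (1 : Matrix Unit Unit R).rank := by simp
    _ ≤ (replicateRow Unit w).rank := hone ▸ rank_mul_le_left _ _
    _ = (replicateRow Unit w * vecMulVec u w).rank := by rw [hrow]
    _ ≤ (vecMulVec u w).rank := rank_mul_le_right _ _

theorem one_sub_two_smul_vecMulVec_single [Ring R] [Invertible (2 : R)] [DecidableEq n]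
    {i j : n} (hij : i ≠ j) :
    1 - (2 : R) • vecMulVec (Pi.single i 1) (Pi.single i 1 - ⅟(2 : R) • Pi.single j 1) =
      of fun k m => if k = i then (if m = i then -1 else if m = j then 1 else 0)
        else if k = m then 1 else 0 := by
  ext k m
  rcases eq_or_ne k i with rfl | hk
  · rcases eq_or_ne m k with rfl | hm
    · norm_num [vecMulVec_apply, hij]
    · rcases eq_or_ne m j with rfl | hmj
      · simp [vecMulVec_apply, hm, hij]
      · simp [vecMulVec_apply, hm, hmj, hm.symm]
  · simp [vecMulVec_apply, hk, one_apply]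

end VecMulVec

section MatrixConjugacy

variable {R n : Type*} [CommRing R] [IsLocalRing R] [Fintype n] [DecidableEq n]

theorem isConj_of_isIdempotentElem_of_rank_eq {P Q : Matrix n n R}
    (hP : IsIdempotentElem P) (hQ : IsIdempotentElem Q) (h : P.rank = Q.rank) : IsConj P Q := by
  have hPQ : IsConj (toLinAlgEquiv' P) (toLinAlgEquiv' Q) :=
    isConj_of_isIdempotentElem_of_finrank_range_eq (hP.map _) (hQ.map _) h
  simpa using (toLinAlgEquiv' (R := R) (n := n)).symm.toMonoidHom.map_isConj hPQ

theorem isConj_one_sub_two_smul_vecMulVec [Invertible (2 : R)] {A : Matrix n n R}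
    (hA : A * A = 1) (hrank : (⅟(2 : R) • (1 - A)).rank = 1) {u w : n → R} (h : w ⬝ᵥ u = 1) :
    IsConj A (1 - (2 : R) • vecMulVec u w) := by
  have hconj : IsConj (⅟(2 : R) • (1 - A)) (vecMulVec u w) :=
    isConj_of_isIdempotentElem_of_rank_eq (isIdempotentElem_invOf_two_smul_one_sub hA)
      (isIdempotentElem_vecMulVec h) (hrank.trans (rank_vecMulVec_eq_one h).symm)
  simpa [smul_smul] using isConj_one_sub_smul (2 : R) hconj

end MatrixConjugacy

/-- Let `l ≥ 2` and let `a` be an `l × l` matrix over a commutative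
local ring `R` (with `2` invertible) with `a² = 1` such that `V₁ = ((1-a)/2)·R^l` is
free of rank `1`.  Then there is `g ∈ GL_l(R)` with `g·a·g⁻¹ = M`, where `M` equals the
identity matrix except `M₁₁ = -1` and `M₁₂ = 1`. -/
theorem stmt5 {R : Type*} [CommRing R] [IsLocalRing R] [Invertible (2 : R)]
    {l : ℕ} (hl : 2 ≤ l)
    (a : Matrix (Fin l) (Fin l) R) (ha : a * a = 1)
    (V1 : Submodule R (Fin l → R))
    (hV1 : V1 = LinearMap.range (⅟(2 : R) • ((1 : Matrix (Fin l) (Fin l) R) - a)).mulVecLin)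
    (hfree : Module.Free R V1) (hrank : Module.rank R V1 = 1) :
    ∃ g : GL (Fin l) R,
      (g : Matrix (Fin l) (Fin l) R) * a * ((g⁻¹ : GL (Fin l) R) : Matrix (Fin l) (Fin l) R) =
        Matrix.of (fun i j : Fin l =>
          if i = (⟨0, by omega⟩ : Fin l) then
            (if j = (⟨0, by omega⟩ : Fin l) then (-1 : R)
             else if j = (⟨1, by omega⟩ : Fin l) then 1 else 0)
          else if i = j then 1 else 0) := by
  subst hV1
  let i : Fin l := ⟨0, by omega⟩
  let j : Fin l := ⟨1, by omega⟩
  have hij : i ≠ j := by simp [i, j]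
  let u : Fin l → R := Pi.single i 1
  let w : Fin l → R := Pi.single i 1 - ⅟(2 : R) • Pi.single j 1
  have hwu : w ⬝ᵥ u = 1 := by simp [u, w, hij]
  obtain ⟨g, hg⟩ := isConj_one_sub_two_smul_vecMulVec ha
    (Module.rank_eq_one_iff_finrank_eq_one.1 hrank) hwu
  refine ⟨g, ?_⟩
  rw [Units.mul_inv_eq_iff_eq_mul, hg.eq, one_sub_two_smul_vecMulVec_single hij]
end

section
/- Let w₁ = [[−1, 1], [0, 1]] and w₂ = [[1, 0], [1, −1]] as 2×2 matrices over R. Suppose x, y are 2×2 matrices over R with x ≡ w₁ (mod J), y ≡ w₂ (mod J), x² = y² = 1, and (xy)² = yx. Then there exists g ∈ GL₂(R) such that g·x·g⁻¹ = w₁ and g·y·g⁻¹ = w₂. -/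
open Matrix

/-!
Cayley–Hamilton does the arithmetic. Since `w₁`, `w₂` and `w₁w₂` do, each of `x`, `y` and `xy` has
an off-diagonal unit entry, so none of these matrices satisfies a nontrivial relation
`s • A = r • 1`. Hence `x` and `y` have determinant `-1`, and `xy`, of determinant `1` and with
`(xy)³ = 1`, satisfies `(xy)² + xy + 1 = 0`, that is, `xy + yx + 1 = 0`. This relation makes
`p = (x - 1)v` and `q = (y - 1)p` transform under `x` and `y` exactly as the standard basis does
under `w₁` and `w₂`, for every vector `v`. For `v = e₂` the pair `(p, q)` reduces to the standard
basis, so it is itself a basis.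
-/

section FinTwo

variable {R : Type*} [CommRing R]

lemma eq_zero_and_eq_zero_of_smul_eq_smul_one {n : Type*} [DecidableEq n] {A : Matrix n n R}
    {i j : n} (hij : i ≠ j) (hA : IsUnit (A i j)) {s r : R}
    (h : s • A = r • (1 : Matrix n n R)) : s = 0 ∧ r = 0 := by
  have hs : s = 0 := hA.mul_left_eq_zero.1 (by simpa [hij] using congrFun₂ h i j)
  exact ⟨hs, by simpa [hs] using (congrFun₂ h i i).symm⟩

lemma mul_self_fin_two (A : Matrix (Fin 2) (Fin 2) R) :
    A * A = A.trace • A - A.det • (1 : Matrix (Fin 2) (Fin 2) R) := by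
  nontriviality R
  have cayley_hamilton := aeval_self_charpoly A
  simp only [charpoly_fin_two, map_add, map_sub, map_mul, Polynomial.aeval_X,
    Polynomial.aeval_C, Algebra.algebraMap_eq_smul_one, smul_one_mul, sq]
    at cayley_hamilton
  linear_combination (norm := module) cayley_hamilton

variable {A : Matrix (Fin 2) (Fin 2) R} {i j : Fin 2}

lemma det_eq_neg_one_of_mul_self_eq_one (hij : i ≠ j) (hA : IsUnit (A i j)) (h : A * A = 1) :
    A.det = -1 := by
  have hrel : A.trace • A = (1 + A.det) • (1 : Matrix (Fin 2) (Fin 2) R) := by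
    rw [add_smul, one_smul, ← sub_eq_iff_eq_add, ← mul_self_fin_two, h]
  exact (neg_eq_of_add_eq_zero_right
    (eq_zero_and_eq_zero_of_smul_eq_smul_one hij hA hrel).2).symm

lemma mul_self_add_self_add_one_eq_zero (hij : i ≠ j) (hA : IsUnit (A i j)) (hdet : A.det = 1)
    (h : A * (A * A) = 1) : A * A + A + 1 = 0 := by
  have hsq : A * A = A.trace • A - 1 := by rw [mul_self_fin_two, hdet, one_smul]
  have hrel : (A.trace ^ 2 - 1) • A = (A.trace + 1) • (1 : Matrix (Fin 2) (Fin 2) R) := by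
    have hcube : A.trace • (A.trace • A - 1) - A = 1 := by
      rw [← hsq, ← mul_smul_comm, ← mul_sub_one, ← hsq, h]
    linear_combination (norm := module) hcube
  have htrace : A.trace = -1 :=
    eq_neg_of_add_eq_zero_left (eq_zero_and_eq_zero_of_smul_eq_smul_one hij hA hrel).2
  rw [hsq, htrace, neg_one_smul]
  abel

lemma mul_add_mul_add_one_eq_zero {x y : Matrix (Fin 2) (Fin 2) R} (hij : i ≠ j)
    (hunit : IsUnit ((x * y) i j)) (hdet : (x * y).det = 1) (hx : x * x = 1) (hy : y * y = 1)
    (hxy : x * y * (x * y) = y * x) : x * y + y * x + 1 = 0 := by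
  have hcube : x * y * (x * y * (x * y)) = 1 := by
    rw [hxy, mul_assoc, ← mul_assoc y, hy, one_mul, hx]
  rw [add_comm (x * y), ← hxy]
  exact mul_self_add_self_add_one_eq_zero hij hunit hdet hcube

end FinTwo

section SimpleRoot

variable {n R : Type*} [Fintype n] [DecidableEq n] [Ring R]

/-- The matrix with columns `p = (x - 1)v` and `q = (y - 1)p`. When `x` and `y` act as the simple
reflections of a root system of type `A₂`, these are simple roots for `x` and `y`, so this matrix
intertwines `x` and `y` with the reflections written in the basis of simple roots. -/
def simpleRootMatrix (x y : Matrix n n R) (v : n → R) : Matrix n (Fin 2) R :=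
  of fun i => ![((x - 1) *ᵥ v) i, ((y - 1) *ᵥ (x - 1) *ᵥ v) i]

lemma mul_simpleRootMatrix_left {x y : Matrix n n R} (hx : x * x = 1)
    (hxy : x * y + y * x + 1 = 0) (v : n → R) :
    x * simpleRootMatrix x y v = simpleRootMatrix x y v * !![(-1 : R), 1; 0, 1] := by
  have hp : x *ᵥ (x - 1) *ᵥ v = -((x - 1) *ᵥ v) := by
    rw [mulVec_mulVec, mul_sub_one, hx, ← neg_sub, neg_mulVec]
  have hmul : x * ((y - 1) * (x - 1)) = (x - 1) + (y - 1) * (x - 1) := by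
    linear_combination (norm := noncomm_ring) hxy * (x - 1) - y * hx - hx
  have hq : x *ᵥ (y - 1) *ᵥ (x - 1) *ᵥ v = (x - 1) *ᵥ v + (y - 1) *ᵥ (x - 1) *ᵥ v := by
    simp only [mulVec_mulVec, hmul, ← add_mulVec]
  ext i j
  fin_cases j
  · exact (congrFun hp i).trans (by simp [simpleRootMatrix, mul_apply])
  · exact (congrFun hq i).trans (by simp [simpleRootMatrix, mul_apply])

lemma mul_simpleRootMatrix_right {x y : Matrix n n R} (hy : y * y = 1) (v : n → R) :
    y * simpleRootMatrix x y v = simpleRootMatrix x y v * !![(1 : R), 0; 1, -1] := by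
  have hp : y *ᵥ (x - 1) *ᵥ v = (x - 1) *ᵥ v + (y - 1) *ᵥ (x - 1) *ᵥ v := by
    rw [sub_mulVec y, one_mulVec, add_sub_cancel]
  have hq : y *ᵥ (y - 1) *ᵥ (x - 1) *ᵥ v = -((y - 1) *ᵥ (x - 1) *ᵥ v) := by
    rw [mulVec_mulVec, mul_sub_one, hy, ← neg_sub, neg_mulVec]
  ext i j
  fin_cases j
  · exact (congrFun hp i).trans (by simp [simpleRootMatrix, mul_apply])
  · exact (congrFun hq i).trans (by simp [simpleRootMatrix, mul_apply])

lemma map_simpleRootMatrix {S : Type*} [Ring S] (f : R →+* S) (x y : Matrix n n R) (v : n → R) :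
    (simpleRootMatrix x y v).map f = simpleRootMatrix (x.map f) (y.map f) (f ∘ v) := by
  have hsub (A : Matrix n n R) : (A - 1).map f = A.map f - 1 := by
    simp only [← f.mapMatrix_apply, map_sub, map_one]
  ext i j
  fin_cases j
  · simp [simpleRootMatrix, RingHom.map_mulVec, hsub]
  · have hp : f ∘ ((x - 1) *ᵥ v) = (x.map f - 1) *ᵥ (f ∘ v) := by
      rw [← hsub]
      exact funext (f.map_mulVec (x - 1) v)
    simp [simpleRootMatrix, RingHom.map_mulVec, hsub, hp, -mulVec_mulVec]

lemma simpleRootMatrix_eq_one :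
    simpleRootMatrix !![(-1 : R), 1; 0, 1] !![(1 : R), 0; 1, -1] ![0, 1] = 1 := by
  ext i j
  fin_cases i <;> fin_cases j <;> simp [simpleRootMatrix, one_fin_two, -mulVec_mulVec]

end SimpleRoot

lemma isUnit_apply_of_map_eq {m n R S : Type*} [Semiring R] [Semiring S] (f : R →+* S)
    [IsLocalHom f] {A : Matrix m n R} {B : Matrix m n S} (h : A.map f = B) {i : m} {j : n}
    (hB : IsUnit (B i j)) : IsUnit (A i j) := by
  subst h
  exact hB.of_map f _

lemma isUnit_of_isUnit_map {n R S : Type*} [Fintype n] [DecidableEq n] [CommRing R] [CommRing S]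
    (f : R →+* S) [IsLocalHom f] {A : Matrix n n R} (h : IsUnit (A.map f)) : IsUnit A := by
  rw [isUnit_iff_isUnit_det] at h ⊢
  rw [← isUnit_map_iff f, f.map_det]
  exact h

lemma isUnit_simpleRootMatrix {R S : Type*} [CommRing R] [CommRing S] (f : R →+* S) [IsLocalHom f]
    {x y : Matrix (Fin 2) (Fin 2) R} (hx : x.map f = !![(-1 : S), 1; 0, 1])
    (hy : y.map f = !![(1 : S), 0; 1, -1]) : IsUnit (simpleRootMatrix x y ![0, 1]) := by
  have he₂ : f ∘ ![0, 1] = ![0, 1] := by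
    ext i
    fin_cases i <;> simp
  apply isUnit_of_isUnit_map f
  rw [map_simpleRootMatrix, hx, hy, he₂, simpleRootMatrix_eq_one]
  exact isUnit_one

lemma map_residue_eq_map_residue_of_sub_mem {m n R : Type*} [CommRing R] [IsLocalRing R]
    {A B : Matrix m n R} (h : ∀ i j, (A - B) i j ∈ IsLocalRing.maximalIdeal R) :
    A.map (IsLocalRing.residue R) = B.map (IsLocalRing.residue R) :=
  Matrix.ext fun i j => Ideal.Quotient.eq.2 (h i j)

theorem stmt6_general {R S : Type*} [CommRing R] [CommRing S] (f : R →+* S) [IsLocalHom f]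
    (x y : Matrix (Fin 2) (Fin 2) R)
    (hx : x.map f = !![(-1 : S), 1; 0, 1]) (hy : y.map f = !![(1 : S), 0; 1, -1])
    (hx2 : x * x = 1) (hy2 : y * y = 1) (hxy : (x * y) * (x * y) = y * x) :
    ∃ g : GL (Fin 2) R,
      (g : Matrix (Fin 2) (Fin 2) R) * x * ((g⁻¹ : GL (Fin 2) R) : Matrix (Fin 2) (Fin 2) R)
        = !![(-1 : R), 1; 0, 1] ∧
      (g : Matrix (Fin 2) (Fin 2) R) * y * ((g⁻¹ : GL (Fin 2) R) : Matrix (Fin 2) (Fin 2) R)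
        = !![(1 : R), 0; 1, -1] := by
  have hx01 : IsUnit (x 0 1) := isUnit_apply_of_map_eq f hx isUnit_one
  have hy10 : IsUnit (y 1 0) := isUnit_apply_of_map_eq f hy isUnit_one
  have hxy01 : IsUnit ((x * y) 0 1) := by
    have hmap : (x * y).map f = !![(0 : S), -1; 1, -1] := by simp [Matrix.map_mul, hx, hy]
    exact isUnit_apply_of_map_eq f hmap isUnit_one.neg
  have hdet : (x * y).det = 1 := by
    rw [det_mul, det_eq_neg_one_of_mul_self_eq_one zero_ne_one hx01 hx2,
      det_eq_neg_one_of_mul_self_eq_one one_ne_zero hy10 hy2, neg_one_mul, neg_neg]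
  have hrel : x * y + y * x + 1 = 0 :=
    mul_add_mul_add_one_eq_zero zero_ne_one hxy01 hdet hx2 hy2 hxy
  obtain ⟨g, hg⟩ := isUnit_simpleRootMatrix f hx hy
  refine ⟨g⁻¹, ?_, ?_⟩
  · rw [inv_inv, mul_assoc, hg, mul_simpleRootMatrix_left hx2 hrel, ← hg, Units.inv_mul_cancel_left]
  · rw [inv_inv, mul_assoc, hg, mul_simpleRootMatrix_right hy2, ← hg, Units.inv_mul_cancel_left]

/-- Over a commutative local ring `R` with `2` invertible (maximal
ideal `J`), let `w₁ = [[-1,1],[0,1]]` and `w₂ = [[1,0],[1,-1]]`.  If `x ≡ w₁ (mod J)`,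
`y ≡ w₂ (mod J)`, `x² = y² = 1` and `(xy)² = yx`, then some `g ∈ GL₂(R)` satisfies
`g·x·g⁻¹ = w₁` and `g·y·g⁻¹ = w₂`. -/
theorem stmt6 {R : Type*} [CommRing R] [IsLocalRing R] [Invertible (2 : R)]
    (x y : Matrix (Fin 2) (Fin 2) R)
    (hx : ∀ i j, (x - !![(-1 : R), 1; 0, 1]) i j ∈ IsLocalRing.maximalIdeal R)
    (hy : ∀ i j, (y - !![(1 : R), 0; 1, -1]) i j ∈ IsLocalRing.maximalIdeal R)
    (hx2 : x * x = 1) (hy2 : y * y = 1)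
    (hxy : (x * y) * (x * y) = y * x) :
    ∃ g : GL (Fin 2) R,
      (g : Matrix (Fin 2) (Fin 2) R) * x * ((g⁻¹ : GL (Fin 2) R) : Matrix (Fin 2) (Fin 2) R)
        = !![(-1 : R), 1; 0, 1] ∧
      (g : Matrix (Fin 2) (Fin 2) R) * y * ((g⁻¹ : GL (Fin 2) R) : Matrix (Fin 2) (Fin 2) R)
        = !![(1 : R), 0; 1, -1] :=
  stmt6_general (IsLocalRing.residue R) x y
    (by simpa [← Matrix.ext_iff] using map_residue_eq_map_residue_of_sub_mem hx)
    (by simpa [← Matrix.ext_iff] using map_residue_eq_map_residue_of_sub_mem hy) hx2 hy2 hxy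
end

section
/- Let w₁ and w₂ be the 3×3 matrices over R with rows (−1,1,0), (0,1,0), (0,0,1) and (1,0,0), (1,−1,1), (0,0,1), respectively. Suppose y is a 3×3 matrix over R with y ≡ w₂ (mod J), y² = 1, and (w₁y)² = y·w₁. Then there exists g ∈ GL₃(R) such that g·w₁·g⁻¹ = w₁ and g·y·g⁻¹ = w₂. -/
/-!
Since `w₁` and `y` are involutions, the relation `(w₁y)² = yw₁` is the braid relation
`w₁yw₁ = yw₁y`, and it makes `w₁y` conjugate `w₁` into `y`. Hence `y` is a reflection
`x ↦ x - ψ(x) v`, like `w₁ : x ↦ x - φ(x) e₀`. For such reflections the two sides of the braid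
relation differ by `(1 - φ(v) ψ(e₀)) (y - w₁)`, so `φ(v) ψ(e₀) = 1` as soon as `y - w₁` has an
invertible entry, and rescaling `v` and `ψ` gives `φ(v) = ψ(e₀) = -1`, the values attached to `w₂`.
A suitable multiple of `e₂` then completes `e₀, v` to a basis in which `w₁` and `y` have the
matrices `w₁` and `w₂`.
-/

open Matrix

theorem braid_of_mul_self_eq_one {M : Type*} [Monoid M] {a b : M} (hb : b * b = 1)
    (hab : (a * b) * (a * b) = b * a) : a * b * a = b * a * b := by
  rw [← hab, mul_assoc (a * b), mul_assoc a b b, hb, mul_one]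

section Pseudoreflection

variable {n R : Type*} [DecidableEq n] [CommRing R]

/-- The matrix of the pseudoreflection `x ↦ x - φ(x) u` along the vector `u`, the linear form `φ`
being given by its row of coefficients. It is a reflection in the strict sense if `φ(u) = 2`, a
condition left to the lemmas. -/
def pseudoreflection (u φ : n → R) : Matrix n n R :=
  1 - vecMulVec u φ

theorem pseudoreflection_smul_smul {a b : R} (hab : a * b = 1) (u φ : n → R) :
    pseudoreflection (a • u) (b • φ) = pseudoreflection u φ := by
  rw [pseudoreflection, smul_vecMulVec, vecMulVec_smul, smul_smul, hab, one_smul, pseudoreflection]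

variable [Fintype n]

theorem pseudoreflection_mul_self {u φ : n → R} (hφu : φ ⬝ᵥ u = 2) :
    pseudoreflection u φ * pseudoreflection u φ = 1 := by
  have hsq : vecMulVec u φ * vecMulVec u φ = (2 : R) • vecMulVec u φ := by
    rw [vecMulVec_mul_vecMulVec, hφu, vecMulVec_smul]
  simp only [pseudoreflection, mul_sub, sub_mul, one_mul, mul_one, hsq]
  module

theorem semiconjBy_pseudoreflection (P : Matrix n n R) (u ψ : n → R) :
    SemiconjBy P (pseudoreflection u (ψ ᵥ* P)) (pseudoreflection (P *ᵥ u) ψ) := by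
  rw [SemiconjBy, pseudoreflection, pseudoreflection, mul_sub, sub_mul, mul_one, one_mul,
    mul_vecMulVec, vecMulVec_mul]

theorem exists_eq_pseudoreflection_of_semiconjBy {P y : Matrix n n R} {u φ : n → R}
    (hP : IsUnit P) (h : SemiconjBy P (pseudoreflection u φ) y) :
    ∃ v ψ, y = pseudoreflection v ψ ∧ ψ ⬝ᵥ v = φ ⬝ᵥ u := by
  obtain ⟨P, rfl⟩ := hP
  have hφ : φ ᵥ* (↑P⁻¹ : Matrix n n R) ᵥ* (P : Matrix n n R) = φ := by
    rw [vecMul_vecMul, Units.inv_mul, vecMul_one]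
  refine ⟨P *ᵥ u, φ ᵥ* (↑P⁻¹ : Matrix n n R), P.isUnit.mul_right_cancel ?_, ?_⟩
  · have hconj := semiconjBy_pseudoreflection (P : Matrix n n R) u (φ ᵥ* (↑P⁻¹ : Matrix n n R))
    rw [hφ] at hconj
    exact h.eq.symm.trans hconj.eq
  · rw [dotProduct_mulVec, hφ]

theorem pseudoreflection_braid_sub_braid {u φ v ψ : n → R}
    (hφu : φ ⬝ᵥ u = 2) (hψv : ψ ⬝ᵥ v = 2) :
    pseudoreflection u φ * pseudoreflection v ψ * pseudoreflection u φ -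
        pseudoreflection v ψ * pseudoreflection u φ * pseudoreflection v ψ =
      (1 - (φ ⬝ᵥ v) * (ψ ⬝ᵥ u)) • (pseudoreflection v ψ - pseudoreflection u φ) := by
  simp only [pseudoreflection, mul_sub, sub_mul, one_mul, mul_one, vecMulVec_mul_vecMulVec,
    vecMulVec_smul, smul_mul, hφu, hψv]
  module

theorem dotProduct_mul_dotProduct_eq_one_of_braid {u φ v ψ : n → R}
    (hφu : φ ⬝ᵥ u = 2) (hψv : ψ ⬝ᵥ v = 2)
    (hbraid : pseudoreflection u φ * pseudoreflection v ψ * pseudoreflection u φ =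
      pseudoreflection v ψ * pseudoreflection u φ * pseudoreflection v ψ)
    {i j : n} (hij : IsUnit ((pseudoreflection v ψ - pseudoreflection u φ) i j)) :
    (φ ⬝ᵥ v) * (ψ ⬝ᵥ u) = 1 := by
  have hzero := pseudoreflection_braid_sub_braid hφu hψv
  rw [hbraid, sub_self] at hzero
  have hentry : (1 - (φ ⬝ᵥ v) * (ψ ⬝ᵥ u)) *
      (pseudoreflection v ψ - pseudoreflection u φ) i j = 0 :=
    (congr_fun₂ hzero i j).symm
  exact (sub_eq_zero.mp (hij.mul_left_eq_zero.mp hentry)).symm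

theorem exists_eq_pseudoreflection_of_braid {u φ : n → R} (hφu : φ ⬝ᵥ u = 2)
    {y : Matrix n n R} (hy : y * y = 1)
    (hbraid : pseudoreflection u φ * y * pseudoreflection u φ = y * pseudoreflection u φ * y)
    {i j : n} (hij : IsUnit ((y - pseudoreflection u φ) i j)) :
    ∃ v ψ, y = pseudoreflection v ψ ∧ ψ ⬝ᵥ v = 2 ∧ φ ⬝ᵥ v = -1 ∧ ψ ⬝ᵥ u = -1 := by
  have hunit : IsUnit (pseudoreflection u φ * y) :=
    (IsUnit.of_mul_eq_one _ (pseudoreflection_mul_self hφu)).mul (IsUnit.of_mul_eq_one _ hy)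
  have hconj : SemiconjBy (pseudoreflection u φ * y) (pseudoreflection u φ) y := by
    rw [SemiconjBy, hbraid, mul_assoc]
  obtain ⟨v, ψ, rfl, hψv⟩ := exists_eq_pseudoreflection_of_semiconjBy hunit hconj
  rw [hφu] at hψv
  have hpq := dotProduct_mul_dotProduct_eq_one_of_braid hφu hψv hbraid hij
  have hscale : -(ψ ⬝ᵥ u) * -(φ ⬝ᵥ v) = 1 := by linear_combination hpq
  refine ⟨-(ψ ⬝ᵥ u) • v, -(φ ⬝ᵥ v) • ψ, (pseudoreflection_smul_smul hscale v ψ).symm, ?_, ?_, ?_⟩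
  · rw [smul_dotProduct, dotProduct_smul, hψv, smul_eq_mul, smul_eq_mul]
    linear_combination 2 * hscale
  · rw [dotProduct_smul, smul_eq_mul]
    linear_combination -hpq
  · rw [smul_dotProduct, smul_eq_mul]
    linear_combination -hpq

end Pseudoreflection

section RankThree

variable {R : Type*} [CommRing R]

theorem pseudoreflection_one_zero_zero :
    pseudoreflection ![1, 0, 0] ![2, -1, 0] = !![(-1 : R), 1, 0; 0, 1, 0; 0, 0, 1] := by
  ext i j
  fin_cases i <;> fin_cases j <;> simp [pseudoreflection]; norm_num

theorem pseudoreflection_zero_one_zero :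
    pseudoreflection ![0, 1, 0] ![-1, 2, -1] = !![(1 : R), 0, 0; 1, -1, 1; 0, 0, 1] := by
  ext i j
  fin_cases i <;> fin_cases j <;> simp [pseudoreflection]; norm_num

theorem exists_simultaneous_semiconjBy_pseudoreflection {v ψ : Fin 3 → R} (hv : IsUnit (v 1))
    (hψ : IsUnit (ψ 2)) (hψv : ψ ⬝ᵥ v = 2) (hφv : ![2, -1, 0] ⬝ᵥ v = -1)
    (hψu : ψ ⬝ᵥ ![1, 0, 0] = -1) :
    ∃ P : GL (Fin 3) R,
      SemiconjBy (P : Matrix (Fin 3) (Fin 3) R) (pseudoreflection ![1, 0, 0] ![2, -1, 0])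
        (pseudoreflection ![1, 0, 0] ![2, -1, 0]) ∧
      SemiconjBy (P : Matrix (Fin 3) (Fin 3) R) (pseudoreflection ![0, 1, 0] ![-1, 2, -1])
        (pseudoreflection v ψ) := by
  obtain ⟨c, hc⟩ := hψ
  -- The third column is the multiple `f` of `e₂` with `ψ(f) = -1`, the value of `![-1, 2, -1]`
  -- at `e₂`; `![2, -1, 0]` vanishes at both.
  let P : Matrix (Fin 3) (Fin 3) R := !![1, v 0, 0; 0, v 1, 0; 0, v 2, -↑c⁻¹]
  have hdet : IsUnit P.det := by
    have hdet_eq : P.det = v 1 * -↑c⁻¹ := by simp [P, det_fin_three]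
    rw [hdet_eq]
    exact hv.mul c⁻¹.isUnit.neg
  have hPu : P *ᵥ ![1, 0, 0] = ![1, 0, 0] := by
    ext i; fin_cases i <;> simp [P]
  have hPv : P *ᵥ ![0, 1, 0] = v := by
    ext i; fin_cases i <;> simp [P]
  have hφP : ![2, -1, 0] ᵥ* P = ![2, -1, 0] := by
    ext j
    fin_cases j
    · simp [P]
    · simpa [P, dotProduct, vecMul, Fin.sum_univ_three] using hφv
    · simp [P]
  have hψP : ψ ᵥ* P = ![-1, 2, -1] := by
    ext j
    fin_cases j
    · simpa [P, dotProduct, vecMul, Fin.sum_univ_three] using hψu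
    · simpa [P, dotProduct, vecMul, Fin.sum_univ_three] using hψv
    · simp [P, dotProduct, vecMul, Fin.sum_univ_three, ← hc]
  refine ⟨GeneralLinearGroup.mk'' P hdet, ?_, ?_⟩
  · have hP := semiconjBy_pseudoreflection P ![1, 0, 0] ![2, -1, 0]
    rwa [hPu, hφP] at hP
  · have hP := semiconjBy_pseudoreflection P ![0, 1, 0] ψ
    rwa [hPv, hψP] at hP

end RankThree

theorem stmt7_general {R : Type*} [CommRing R]
    (y : Matrix (Fin 3) (Fin 3) R) (hy12 : IsUnit (y 1 2)) (hy2 : y * y = 1)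
    (hw1y : (!![(-1 : R), 1, 0; 0, 1, 0; 0, 0, 1] * y) * (!![(-1 : R), 1, 0; 0, 1, 0; 0, 0, 1] * y)
      = y * !![(-1 : R), 1, 0; 0, 1, 0; 0, 0, 1]) :
    ∃ g : GL (Fin 3) R,
      (g : Matrix (Fin 3) (Fin 3) R) * !![(-1 : R), 1, 0; 0, 1, 0; 0, 0, 1] *
          ((g⁻¹ : GL (Fin 3) R) : Matrix (Fin 3) (Fin 3) R)
        = !![(-1 : R), 1, 0; 0, 1, 0; 0, 0, 1] ∧
      (g : Matrix (Fin 3) (Fin 3) R) * y * ((g⁻¹ : GL (Fin 3) R) : Matrix (Fin 3) (Fin 3) R)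
        = !![(1 : R), 0, 0; 1, -1, 1; 0, 0, 1] := by
  rw [← pseudoreflection_one_zero_zero] at hw1y ⊢
  rw [← pseudoreflection_zero_one_zero]
  have hφu : ![2, -1, 0] ⬝ᵥ ![1, 0, 0] = (2 : R) := by simp
  have hentry : IsUnit ((y - pseudoreflection ![1, 0, 0] ![2, -1, 0] : Matrix _ _ R) 1 2) := by
    simpa [pseudoreflection] using hy12
  obtain ⟨v, ψ, rfl, hψv, hφv, hψu⟩ :=
    exists_eq_pseudoreflection_of_braid hφu hy2 (braid_of_mul_self_eq_one hy2 hw1y) hentry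
  have hvψ : IsUnit (v 1 * ψ 2) := by
    simpa [pseudoreflection, vecMulVec_apply] using hy12
  obtain ⟨hv, hψ⟩ := IsUnit.mul_iff.mp hvψ
  obtain ⟨P, hP₁, hP₂⟩ := exists_simultaneous_semiconjBy_pseudoreflection hv hψ hψv hφv hψu
  exact ⟨P⁻¹, Units.mul_inv_eq_iff_eq_mul _ |>.mpr hP₁.units_inv_symm_left.eq,
    Units.mul_inv_eq_iff_eq_mul _ |>.mpr hP₂.units_inv_symm_left.eq⟩

theorem isUnit_of_sub_mem_maximalIdeal {R : Type*} [CommRing R] [IsLocalRing R] {x u : R}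
    (hu : IsUnit u) (h : x - u ∈ IsLocalRing.maximalIdeal R) : IsUnit x := by
  have hres : IsLocalRing.residue R x = IsLocalRing.residue R u := Ideal.Quotient.eq.mpr h
  rwa [← isUnit_map_iff (IsLocalRing.residue R), hres, isUnit_map_iff]

/-- Over a commutative local ring `R` with `2` invertible (maximal
ideal `J`), let `w₁, w₂` be the `3 × 3` matrices with rows `(-1,1,0),(0,1,0),(0,0,1)`
and `(1,0,0),(1,-1,1),(0,0,1)`.  If `y ≡ w₂ (mod J)`, `y² = 1` and `(w₁y)² = y·w₁`,
then some `g ∈ GL₃(R)` satisfies `g·w₁·g⁻¹ = w₁` and `g·y·g⁻¹ = w₂`. -/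
theorem stmt7 {R : Type*} [CommRing R] [IsLocalRing R] [Invertible (2 : R)]
    (y : Matrix (Fin 3) (Fin 3) R)
    (hy : ∀ i j, (y - !![(1 : R), 0, 0; 1, -1, 1; 0, 0, 1]) i j ∈ IsLocalRing.maximalIdeal R)
    (hy2 : y * y = 1)
    (hw1y : (!![(-1 : R), 1, 0; 0, 1, 0; 0, 0, 1] * y) * (!![(-1 : R), 1, 0; 0, 1, 0; 0, 0, 1] * y)
      = y * !![(-1 : R), 1, 0; 0, 1, 0; 0, 0, 1]) :
    ∃ g : GL (Fin 3) R,
      (g : Matrix (Fin 3) (Fin 3) R) * !![(-1 : R), 1, 0; 0, 1, 0; 0, 0, 1] *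
          ((g⁻¹ : GL (Fin 3) R) : Matrix (Fin 3) (Fin 3) R)
        = !![(-1 : R), 1, 0; 0, 1, 0; 0, 0, 1] ∧
      (g : Matrix (Fin 3) (Fin 3) R) * y * ((g⁻¹ : GL (Fin 3) R) : Matrix (Fin 3) (Fin 3) R)
        = !![(1 : R), 0, 0; 1, -1, 1; 0, 0, 1] := by
  have hy12 : IsUnit (y 1 2) := isUnit_of_sub_mem_maximalIdeal isUnit_one (hy 1 2)
  exact stmt7_general y hy12 hy2 hw1y
end

section
/- Let w₁, w₂, w₃, w₄ be the 4×4 matrices over R that equal the identity matrix except for one row: row 1 of w₁ is (−1,1,0,0); row 2 of w₂ is (1,−1,1,1); row 3 of w₃ is (0,1,−1,0); row 4 of w₄ is (0,1,0,−1). Suppose y₁, y₂, y₃, y₄ are 4×4 matrices over R with yᵢ ≡ wᵢ (mod J) and yᵢ² = 1 for each i, such that y₁, y₃, y₄ pairwise commute and (y₁y₂)² = y₂y₁, (y₃y₂)² = y₂y₃, (y₄y₂)² = y₂y₄. Then there exists g ∈ GL₄(R) such that g·yᵢ·g⁻¹ = wᵢ for i = 1, 2, 3, 4. -/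
open Matrix

/-!
Let `C₀` have diagonal entries `2`. If an involution `y` reduces to the reflection of `C₀` at `i`,
it is conjugate, through `1 + y * s`, to the diagonal reflection `s` at `i`: this matrix intertwines
the two involutions, and it is invertible because its reduction is `2` plus a square-zero matrix.
Hence `y i = 1 - a i ⊗ b i` with `b i ⬝ᵥ a i = 2`, and the vectors `a i` reduce to twice the
standard basis. In the basis `a i` the matrices `y i` become the reflections of the matrix
`C i j = b i ⬝ᵥ a j`, for which a commutation relation forces `C i j = 0` and a braid relation
forces `C i j * C j i = 1`. When the Coxeter graph is a forest, rescaling the basis vectors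
along its edges turns every remaining off-diagonal entry into `-1`.
-/

section Involution

variable {M : Type*} {a b : M}

theorem semiconjBy_one_add_mul [Semiring M] (ha : a * a = 1) (hb : b * b = 1) :
    SemiconjBy (1 + a * b) b a := by
  rw [SemiconjBy, add_mul, mul_add, one_mul, mul_one, mul_assoc, hb, ← mul_assoc, ha, one_mul,
    mul_one, add_comm]

theorem mul_mul_eq_mul_mul_of_mul_mul_mul_eq [Monoid M] (hb : b * b = 1)
    (h : (a * b) * (a * b) = b * a) : a * b * a = b * a * b := by
  rw [← h, mul_assoc (a * b), mul_assoc a b b, hb, mul_one]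

end Involution

section LocalHom

variable {n R S : Type*} [Fintype n] [DecidableEq n] [CommRing R] [CommRing S]

instance isLocalHom_mapMatrix_s8 (f : R →+* S) [IsLocalHom f] :
    IsLocalHom (f.mapMatrix : Matrix n n R →+* Matrix n n S) where
  map_nonunit M hM := by
    rw [isUnit_iff_isUnit_det, ← RingHom.map_det] at hM
    exact (isUnit_iff_isUnit_det M).2 (isUnit_of_map_unit f _ hM)

end LocalHom

section Potential

variable {V H : Type*} {G : SimpleGraph V} [Group H]

theorem prod_map_darts_of_adj (hG : G.IsAcyclic) {t : G.Dart → H}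
    (ht : ∀ e, t e.symm = (t e)⁻¹) {r v w : V} {p : G.Walk r v} {q : G.Walk r w}
    (hp : p.IsPath) (hq : q.IsPath) (hvw : G.Adj v w) :
    (q.darts.map t).prod = (p.darts.map t).prod * t ⟨(v, w), hvw⟩ := by
  by_cases hv : v ∈ q.support
  · simp [hG.path_concat hp hq hvw hv, SimpleGraph.Walk.darts_concat]
  · have hw := hG.mem_support_of_ne_mem_support_of_adj_of_isPath hp hq hvw hv
    have hsymm : t ⟨(w, v), hvw.symm⟩ = (t ⟨(v, w), hvw⟩)⁻¹ := ht ⟨(v, w), hvw⟩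
    simp [hG.path_concat hq hp hvw.symm hw, SimpleGraph.Walk.darts_concat, hsymm]

theorem exists_dart_snd_eq_mul_of_isAcyclic (hG : G.IsAcyclic) {t : G.Dart → H}
    (ht : ∀ e, t e.symm = (t e)⁻¹) : ∃ d : V → H, ∀ e : G.Dart, d e.snd = d e.fst * t e := by
  have hpath (v : V) : ∃ p : G.Walk (G.connectedComponentMk v).out v, p.IsPath :=
    (SimpleGraph.ConnectedComponent.exact (Quot.out_eq _)).exists_isPath
  choose p hp using hpath
  refine ⟨fun v => ((p v).darts.map t).prod, fun e => ?_⟩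
  have hroot : (G.connectedComponentMk e.fst).out = (G.connectedComponentMk e.snd).out := by
    rw [SimpleGraph.ConnectedComponent.connectedComponentMk_eq_of_adj e.adj]
  have hfst : ((p e.fst).copy hroot rfl).IsPath := by simpa using hp e.fst
  simpa using prod_map_darts_of_adj hG ht hfst (hp e.snd) e.adj

end Potential

section Reflection

variable {n R S : Type*} [DecidableEq n] [CommRing R] [CommRing S]

/-- The matrix of the reflection `x ↦ x - ⟨αᵢ^∨, x⟩ αᵢ` in the basis of simple roots `αⱼ`, where
`C i j = ⟨αᵢ^∨, αⱼ⟩`. It is an honest reflection only if `C i i = 2`, which is not built in. -/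
def reflectionMatrix (C : Matrix n n R) (i : n) : Matrix n n R :=
  1 - vecMulVec (Pi.single i 1) (C i)

theorem reflectionMatrix_apply (C : Matrix n n R) (i s t : n) :
    reflectionMatrix C i s t = (1 : Matrix n n R) s t - if s = i then C i t else 0 := by
  simp [reflectionMatrix, vecMulVec_apply, Pi.single_apply]

variable [Fintype n]

theorem mapMatrix_reflectionMatrix (f : R →+* S) (C : Matrix n n R) (i : n) :
    f.mapMatrix (reflectionMatrix C i) = reflectionMatrix (f.mapMatrix C) i := by
  ext s t
  simp [reflectionMatrix_apply, Matrix.one_apply, apply_ite f]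

theorem reflectionMatrix_mulVec (C : Matrix n n R) (i : n) (x : n → R) :
    reflectionMatrix C i *ᵥ x = x - (C i ⬝ᵥ x) • Pi.single i 1 := by
  simp [reflectionMatrix, sub_mulVec, vecMulVec_mulVec]

theorem reflectionMatrix_mulVec_single_self {C : Matrix n n R} {i : n} (hC : C i i = 2) :
    reflectionMatrix C i *ᵥ Pi.single i 1 = -Pi.single i 1 := by
  rw [reflectionMatrix_mulVec, dotProduct_single_one, hC, two_smul, sub_add_cancel_left]

theorem reflectionMatrix_mul_reflectionMatrix_self {C : Matrix n n R} {i : n} (hC : C i i = 2)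
    (C' : Matrix n n R) :
    reflectionMatrix C i * reflectionMatrix C' i =
      1 + vecMulVec (Pi.single i 1) (C' i - C i) := by
  rw [reflectionMatrix.eq_1 C', mul_sub, mul_one, mul_vecMulVec,
    reflectionMatrix_mulVec_single_self hC, neg_vecMulVec, vecMulVec_sub, reflectionMatrix]
  abel

theorem reflectionMatrix_mul_self {C : Matrix n n R} {i : n} (hC : C i i = 2) :
    reflectionMatrix C i * reflectionMatrix C i = 1 := by
  rw [reflectionMatrix_mul_reflectionMatrix_self hC, sub_self, vecMulVec_zero, add_zero]

theorem isUnit_one_add_reflectionMatrix_mul {C C' : Matrix n n R} {i : n} (h2 : IsUnit (2 : R))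
    (hC : C i i = 2) (hC' : C' i i = 2) :
    IsUnit (1 + reflectionMatrix C i * reflectionMatrix C' i) := by
  set N := vecMulVec (Pi.single i 1) (C' i - C i) with hN
  have hnil : IsNilpotent N := ⟨2, by simp [hN, sq, vecMulVec_mul_vecMulVec, hC, hC']⟩
  have h2' : IsUnit (2 : Matrix n n R) := by
    simpa only [map_ofNat] using h2.map (algebraMap R (Matrix n n R))
  rw [reflectionMatrix_mul_reflectionMatrix_self hC, ← add_assoc, one_add_one_eq_two]
  exact hnil.isUnit_add_left_of_commute h2' (Commute.ofNat_right N 2)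

theorem exists_eq_one_sub_vecMulVec (f : R →+* S) [IsLocalHom f] (h2 : IsUnit (2 : R))
    {C₀ : Matrix n n S} {i : n} (hC₀ : C₀ i i = 2) {y : Matrix n n R} (hsq : y * y = 1)
    (hy : f.mapMatrix y = reflectionMatrix C₀ i) :
    ∃ a b : n → R, y = 1 - vecMulVec a b ∧ b ⬝ᵥ a = 2 ∧ f ∘ a = Pi.single i 2 := by
  have h2R : (2 : Matrix n n R) i i = 2 := by simp [ofNat_apply]
  have h2S : (2 : Matrix n n S) i i = 2 := by simp [ofNat_apply]
  set s : Matrix n n R := reflectionMatrix 2 i with hs_def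
  have hs : f.mapMatrix s = reflectionMatrix 2 i := by
    rw [mapMatrix_reflectionMatrix, map_ofNat]
  have hmap : f.mapMatrix (1 + y * s) = 1 + reflectionMatrix C₀ i * reflectionMatrix 2 i := by
    rw [map_add, map_one, map_mul, hy, hs]
  have hunit : IsUnit (1 + y * s) := by
    refine isUnit_of_map_unit f.mapMatrix _ ?_
    rw [hmap]
    exact isUnit_one_add_reflectionMatrix_mul (map_ofNat f 2 ▸ h2.map f) hC₀ h2S
  obtain ⟨u, hu⟩ := hunit
  have hyu : y = u * s * (u⁻¹ : GL n R) := by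
    rw [Units.eq_mul_inv_iff_mul_eq, hu]
    exact (semiconjBy_one_add_mul hsq (reflectionMatrix_mul_self h2R)).symm
  refine ⟨u *ᵥ Pi.single i 1, (2 : Matrix n n R) i ᵥ* (u⁻¹ : GL n R), ?_, ?_, ?_⟩
  · rw [hyu, ← mul_vecMulVec, ← vecMulVec_mul, hs_def, reflectionMatrix, mul_sub, sub_mul, mul_one,
      Units.mul_inv, mul_assoc]
  · rw [← dotProduct_mulVec, mulVec_mulVec, Units.inv_mul, one_mulVec, dotProduct_single_one, h2R]
  · calc f ∘ (u *ᵥ Pi.single i 1)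
        = f.mapMatrix u *ᵥ Pi.single i 1 := by ext; simp
      _ = Pi.single i 1 + Pi.single i 1 := by
        rw [hu, hmap, add_mulVec, one_mulVec, ← mulVec_mulVec,
          reflectionMatrix_mulVec_single_self h2S, mulVec_neg,
          reflectionMatrix_mulVec_single_self hC₀, neg_neg]
      _ = Pi.single i 2 := by rw [← Pi.single_add, one_add_one_eq_two]

theorem one_sub_vecMulVec_mul (A B : Matrix n n R) (i : n) :
    (1 - vecMulVec (A.col i) (B i)) * A = A * reflectionMatrix (B * A) i := by
  rw [reflectionMatrix, sub_mul, mul_sub, one_mul, mul_one, vecMulVec_mul, mul_vecMulVec,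
    mulVec_single_one, mul_apply_eq_vecMul]

theorem exists_conj_eq_reflectionMatrix (f : R →+* S) [IsLocalHom f] (h2 : IsUnit (2 : R))
    {C₀ : Matrix n n S} (hC₀ : ∀ i, C₀ i i = 2) {y : n → Matrix n n R}
    (hsq : ∀ i, y i * y i = 1) (hy : ∀ i, f.mapMatrix (y i) = reflectionMatrix C₀ i) :
    ∃ (g : ConjAct (GL n R)) (C : Matrix n n R),
      (∀ i, C i i = 2) ∧ ∀ i, g • y i = reflectionMatrix C i := by
  choose a b hyab hba ha using fun i => exists_eq_one_sub_vecMulVec f h2 (hC₀ i) (hsq i) (hy i)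
  have hunit : IsUnit (of a)ᵀ := by
    refine isUnit_of_map_unit f.mapMatrix _ ?_
    have hmap : f.mapMatrix (of a)ᵀ = algebraMap S _ 2 := by
      ext s t
      simpa [Pi.single_apply, algebraMap_matrix_apply] using congrFun (ha t) s
    exact hmap ▸ (map_ofNat f 2 ▸ h2.map f).map _
  obtain ⟨A, hA⟩ := hunit
  refine ⟨ConjAct.toConjAct A⁻¹, of b * (A : Matrix n n R), fun i => ?_, fun i => ?_⟩
  · rw [hA, mul_apply']
    exact hba i
  · have hyA : y i * A = A * reflectionMatrix (of b * (A : Matrix n n R)) i := by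
      rw [← one_sub_vecMulVec_mul, hA, hyab]
      rfl
    rw [ConjAct.units_smul_def, ConjAct.ofConjAct_toConjAct, inv_inv, mul_assoc, hyA,
      Units.inv_mul_cancel_left]

theorem eq_zero_of_commute_reflectionMatrix {C : Matrix n n R} (h2 : IsLeftRegular (2 : R))
    {i j : n} (hij : i ≠ j) (hj : C j j = 2)
    (h : Commute (reflectionMatrix C i) (reflectionMatrix C j)) : C i j = 0 := by
  have hentry := congrFun (congrArg (· *ᵥ Pi.single j 1) h.eq) i
  simp only [← mulVec_mulVec, reflectionMatrix_mulVec, dotProduct_sub, dotProduct_smul,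
    dotProduct_single_one, Pi.sub_apply, Pi.smul_apply, Pi.single_eq_same,
    Pi.single_eq_of_ne hij, hj, smul_eq_mul] at hentry
  refine h2 ?_
  linear_combination hentry

theorem mul_eq_one_of_reflectionMatrix_braid {C : Matrix n n R} (h2 : IsLeftRegular (2 : R))
    {i j : n} (hij : i ≠ j) (hi : C i i = 2) (hj : C j j = 2)
    (h : reflectionMatrix C i * reflectionMatrix C j * reflectionMatrix C i =
      reflectionMatrix C j * reflectionMatrix C i * reflectionMatrix C j) :
    C i j * C j i = 1 := by
  have hentry := congrFun (congrArg (· *ᵥ Pi.single j 1) h) j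
  simp only [← mulVec_mulVec, reflectionMatrix_mulVec, dotProduct_sub, dotProduct_smul,
    dotProduct_single_one, Pi.sub_apply, Pi.smul_apply, Pi.single_eq_same,
    Pi.single_eq_of_ne hij.symm, hi, hj, smul_eq_mul] at hentry
  refine h2 ?_
  linear_combination hentry

theorem exists_conj_reflectionMatrix_eq {C C' : Matrix n n R} {d : n → Rˣ}
    (hd : ∀ i j, d i * C i j = C' i j * d j) :
    ∃ g : ConjAct (GL n R), ∀ i, g • reflectionMatrix C i = reflectionMatrix C' i := by
  set D : GL n R := Units.map (diagonalRingHom n R).toMonoidHom (MulEquiv.piUnits.symm d)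
  have hD : (D : Matrix n n R) = diagonal fun j => (d j : R) := rfl
  refine ⟨ConjAct.toConjAct D, fun i => ?_⟩
  rw [ConjAct.units_smul_def, ConjAct.ofConjAct_toConjAct, Units.mul_inv_eq_iff_eq_mul, hD]
  ext s t
  rw [diagonal_mul, mul_diagonal, reflectionMatrix_apply, reflectionMatrix_apply]
  obtain rfl | hsi := eq_or_ne s i
  · rw [if_pos rfl, if_pos rfl, mul_sub, sub_mul, hd]
    obtain rfl | hst := eq_or_ne s t <;> simp [*]
  · obtain rfl | hst := eq_or_ne s t <;> simp [*]

end Reflection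

section Forest

variable {V R S : Type*} [DecidableEq V] [CommRing R] [CommRing S]

/-- The generalized Cartan matrix of the simply-laced Coxeter graph `G`. -/
def graphCartanMatrix (R : Type*) [CommRing R] (G : SimpleGraph V) [DecidableRel G.Adj] :
    Matrix V V R :=
  2 - G.adjMatrix R

variable (G : SimpleGraph V) [DecidableRel G.Adj]

theorem graphCartanMatrix_apply (i j : V) :
    graphCartanMatrix R G i j = (if i = j then 2 else 0) - if G.Adj i j then 1 else 0 := by
  simp [graphCartanMatrix, ofNat_apply]

theorem graphCartanMatrix_apply_self (i : V) : graphCartanMatrix R G i i = 2 := by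
  simp [graphCartanMatrix_apply]

variable {G}

theorem exists_rescaling_eq_graphCartanMatrix (hG : G.IsAcyclic) {C : Matrix V V R}
    (hdiag : ∀ i, C i i = 2) (hzero : ∀ i j, i ≠ j → ¬ G.Adj i j → C i j = 0)
    (hone : ∀ i j, G.Adj i j → C i j * C j i = 1) :
    ∃ d : V → Rˣ, ∀ i j, d i * C i j = graphCartanMatrix R G i j * d j := by
  set t : G.Dart → Rˣ := fun e =>
    ⟨-C e.fst e.snd, -C e.snd e.fst, by rw [neg_mul_neg, hone _ _ e.adj],
      by rw [neg_mul_neg, hone _ _ e.adj.symm]⟩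
  obtain ⟨d, hd⟩ := exists_dart_snd_eq_mul_of_isAcyclic hG (t := t) fun _ => rfl
  refine ⟨d, fun i j => ?_⟩
  rw [graphCartanMatrix_apply]
  obtain rfl | hij := eq_or_ne i j
  · simp [hdiag, mul_comm]
  by_cases hadj : G.Adj i j
  · have hdj : (d j : R) = d i * -C i j := congrArg Units.val (hd ⟨(i, j), hadj⟩)
    simp [hij, hadj, hdj]
  · simp [hij, hadj, hzero]

theorem stmt8_general [Fintype V] (hG : G.IsAcyclic) (f : R →+* S) [IsLocalHom f]
    (h2 : IsUnit (2 : R)) {C₀ : Matrix V V S} (hC₀ : ∀ i, C₀ i i = 2)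
    {y : V → Matrix V V R} (hy : ∀ i, f.mapMatrix (y i) = reflectionMatrix C₀ i)
    (hsq : ∀ i, y i * y i = 1) (hcomm : ∀ i j, i ≠ j → ¬ G.Adj i j → Commute (y i) (y j))
    (hbraid : ∀ i j, G.Adj i j → y i * y j * y i = y j * y i * y j) :
    ∃ g : GL V R, ∀ i, (g : Matrix V V R) * y i * (g⁻¹ : GL V R) =
      reflectionMatrix (graphCartanMatrix R G) i := by
  obtain ⟨g, C, hC, hgy⟩ := exists_conj_eq_reflectionMatrix f h2 hC₀ hsq hy
  have h2reg : IsLeftRegular (2 : R) := h2.isRegular.left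
  have hzero (i j) (hij : i ≠ j) (hadj : ¬ G.Adj i j) : C i j = 0 := by
    refine eq_zero_of_commute_reflectionMatrix h2reg hij (hC j) ?_
    rw [← hgy, ← hgy, Commute, SemiconjBy, ← smul_mul', ← smul_mul', (hcomm i j hij hadj).eq]
  have hone (i j) (hadj : G.Adj i j) : C i j * C j i = 1 := by
    refine mul_eq_one_of_reflectionMatrix_braid h2reg hadj.ne (hC i) (hC j) ?_
    simp only [← hgy, ← smul_mul', hbraid i j hadj]
  obtain ⟨d, hd⟩ := exists_rescaling_eq_graphCartanMatrix hG hC hzero hone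
  obtain ⟨g', hg'⟩ := exists_conj_reflectionMatrix_eq hd
  exact ⟨ConjAct.ofConjAct (g' * g), fun i => by
    rw [← ConjAct.units_smul_def, mul_smul, hgy, hg']⟩

theorem exists_conj_eq_starGraph_reflectionMatrix [Fintype V] [IsLocalRing R]
    (h2 : IsUnit (2 : R)) {r : V} {y : V → Matrix V V R}
    (hmod : ∀ i p q, (y i - reflectionMatrix (graphCartanMatrix R (.starGraph r)) i) p q ∈
      IsLocalRing.maximalIdeal R)
    (hsq : ∀ i, y i * y i = 1) (hcomm : ∀ i j, i ≠ r → j ≠ r → Commute (y i) (y j))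
    (hbraid : ∀ i, i ≠ r → (y i * y r) * (y i * y r) = y r * y i) :
    ∃ g : GL V R, ∀ i, (g : Matrix V V R) * y i * (g⁻¹ : GL V R) =
      reflectionMatrix (graphCartanMatrix R (.starGraph r)) i := by
  set f := IsLocalRing.residue R
  have hleaf (i) (hi : i ≠ r) : y i * y r * y i = y r * y i * y r :=
    mul_mul_eq_mul_mul_of_mul_mul_mul_eq (hsq r) (hbraid i hi)
  refine stmt8_general (C₀ := f.mapMatrix (graphCartanMatrix R (.starGraph r)))
    (SimpleGraph.isAcyclic_starGraph r) f h2 (fun i => ?_) (fun i => ?_) hsq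
    (fun i j hij hadj => ?_) (fun i j hadj => ?_)
  · rw [RingHom.mapMatrix_apply, map_apply, graphCartanMatrix_apply_self, map_ofNat]
  · rw [← mapMatrix_reflectionMatrix]
    ext p q
    exact Ideal.Quotient.eq.2 (hmod i p q)
  · rw [SimpleGraph.starGraph_adj, not_and, not_or] at hadj
    exact hcomm i j (hadj hij).1 (hadj hij).2
  · obtain ⟨hij, rfl | rfl⟩ := SimpleGraph.starGraph_adj.1 hadj
    · exact (hleaf j hij.symm).symm
    · exact hleaf i hij

end Forest

/-- Over a commutative local ring `R` with `2` invertible (maximal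
ideal `J`), let `w₁, w₂, w₃, w₄` be the `4 × 4` matrices equal to the identity except:
row 1 of `w₁` is `(-1,1,0,0)`; row 2 of `w₂` is `(1,-1,1,1)`; row 3 of `w₃` is
`(0,1,-1,0)`; row 4 of `w₄` is `(0,1,0,-1)`.  If `yᵢ ≡ wᵢ (mod J)`, `yᵢ² = 1`,
`y₁, y₃, y₄` pairwise commute and `(y₁y₂)² = y₂y₁`, `(y₃y₂)² = y₂y₃`, `(y₄y₂)² = y₂y₄`,
then some `g ∈ GL₄(R)` satisfies `g·yᵢ·g⁻¹ = wᵢ` for `i = 1,2,3,4`. -/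
theorem stmt8 {R : Type*} [CommRing R] [IsLocalRing R] [Invertible (2 : R)]
    (w y : Fin 4 → Matrix (Fin 4) (Fin 4) R)
    (hw1 : w 0 = !![(-1 : R), 1, 0, 0; 0, 1, 0, 0; 0, 0, 1, 0; 0, 0, 0, 1])
    (hw2 : w 1 = !![(1 : R), 0, 0, 0; 1, -1, 1, 1; 0, 0, 1, 0; 0, 0, 0, 1])
    (hw3 : w 2 = !![(1 : R), 0, 0, 0; 0, 1, 0, 0; 0, 1, -1, 0; 0, 0, 0, 1])
    (hw4 : w 3 = !![(1 : R), 0, 0, 0; 0, 1, 0, 0; 0, 0, 1, 0; 0, 1, 0, -1])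
    (hmod : ∀ i, ∀ p q, (y i - w i) p q ∈ IsLocalRing.maximalIdeal R)
    (hsq : ∀ i, y i * y i = 1)
    (hc13 : y 0 * y 2 = y 2 * y 0)
    (hc14 : y 0 * y 3 = y 3 * y 0)
    (hc34 : y 2 * y 3 = y 3 * y 2)
    (hb1 : (y 0 * y 1) * (y 0 * y 1) = y 1 * y 0)
    (hb3 : (y 2 * y 1) * (y 2 * y 1) = y 1 * y 2)
    (hb4 : (y 3 * y 1) * (y 3 * y 1) = y 1 * y 3) :
    ∃ g : GL (Fin 4) R, ∀ i,
      (g : Matrix (Fin 4) (Fin 4) R) * y i * ((g⁻¹ : GL (Fin 4) R) : Matrix (Fin 4) (Fin 4) R)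
        = w i := by
  have hsub : (1 : R) - 2 = -1 := by norm_num
  have hw (i) : w i = reflectionMatrix (graphCartanMatrix R (.starGraph 1)) i := by
    fin_cases i <;> ext p q <;> fin_cases p <;> fin_cases q <;>
      simp [hw1, hw2, hw3, hw4, reflectionMatrix_apply, graphCartanMatrix_apply, hsub]
  have hcomm (i j) (hi : i ≠ 1) (hj : j ≠ 1) : Commute (y i) (y j) := by
    fin_cases i <;> fin_cases j <;> simp_all [Commute, SemiconjBy]
  have hbraid (i) (hi : i ≠ 1) : (y i * y 1) * (y i * y 1) = y 1 * y i := by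
    fin_cases i <;> simp_all
  simp only [hw] at hmod ⊢
  exact exists_conj_eq_starGraph_reflectionMatrix (isUnit_of_invertible 2) hmod hsq hcomm hbraid
end

section
/- Let f : R → R be a map that is additive (f(x + y) = f(x) + f(y) for all x, y ∈ R), satisfies f(1) = 1, and satisfies f(uv) = f(u)·f(v) for all units u, v of R. Then f(xy) = f(x)·f(y) for all x, y ∈ R; that is, f is a ring homomorphism. -/
/-! In a local ring `x` or `1 - x` is a unit, and `x = 1 + -(1 - x)`, so every element is a sum of
units. An additive map is therefore multiplicative as soon as it is so on units, because
`f (x * y)` and `f x * f y` are both biadditive in `x` and `y`. -/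

theorem map_mul_of_addSubmonoidClosure_eq_top {R S : Type*} [NonUnitalNonAssocSemiring R]
    [NonUnitalNonAssocSemiring S] (f : R →+ S) {s : Set R} (hs : AddSubmonoid.closure s = ⊤)
    (hf : ∀ u ∈ s, ∀ v ∈ s, f (u * v) = f u * f v) (x y : R) : f (x * y) = f x * f y := by
  have hx : x ∈ AddSubmonoid.closure s := hs ▸ AddSubmonoid.mem_top x
  have hy : y ∈ AddSubmonoid.closure s := hs ▸ AddSubmonoid.mem_top y
  induction hx, hy using AddSubmonoid.closure_induction₂ with
  | mem u v hu hv => exact hf u hu v hv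
  | zero_left y _ => simp
  | zero_right x _ => simp
  | add_left x₁ x₂ y _ _ _ h₁ h₂ => rw [add_mul, map_add, map_add, add_mul, h₁, h₂]
  | add_right x y₁ y₂ _ _ _ h₁ h₂ => rw [mul_add, map_add, map_add, mul_add, h₁, h₂]

theorem addSubmonoidClosure_isUnit_eq_top (R : Type*) [Ring R] [IsLocalRing R] :
    AddSubmonoid.closure {u : R | IsUnit u} = ⊤ := by
  refine eq_top_iff.2 fun x _ ↦ ?_
  rcases IsLocalRing.isUnit_or_isUnit_of_add_one (add_sub_cancel x 1) with hx | hx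
  · exact AddSubmonoid.subset_closure hx
  · have h : 1 + -(1 - x) ∈ AddSubmonoid.closure {u : R | IsUnit u} :=
      add_mem (AddSubmonoid.subset_closure isUnit_one) (AddSubmonoid.subset_closure hx.neg)
    rwa [neg_sub, add_sub_cancel] at h

theorem stmt10_general {R S : Type*} [Ring R] [IsLocalRing R] [NonUnitalNonAssocSemiring S]
    (f : R →+ S) (hf : ∀ u v : R, IsUnit u → IsUnit v → f (u * v) = f u * f v) (x y : R) :
    f (x * y) = f x * f y :=
  map_mul_of_addSubmonoidClosure_eq_top f (addSubmonoidClosure_isUnit_eq_top R)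
    (fun u hu v hv ↦ hf u v hu hv) x y

/-- Let `R` be a commutative local ring with `2` invertible, and let
`f : R → R` be additive, with `f 1 = 1`, and multiplicative on units.  Then
`f (x*y) = f x * f y` for all `x, y ∈ R`; that is, `f` is a ring homomorphism. -/
theorem stmt10 {R : Type*} [CommRing R] [IsLocalRing R] [Invertible (2 : R)]
    (f : R → R)
    (hadd : ∀ x y : R, f (x + y) = f x + f y)
    (hone : f 1 = 1)
    (hunits : ∀ u v : R, IsUnit u → IsUnit v → f (u * v) = f u * f v) :
    ∀ x y : R, f (x * y) = f x * f y := by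
  exact stmt10_general (AddMonoidHom.mk' f hadd) hunits
end

section
/- Let M be an n×n matrix over R with M² = 1 and M ≡ 1 (mod J). Then M = 1. -/
/-!
An involution `a` is determined by the idempotent `e = (1 - a) / 2`. If `a ≡ 1` modulo the
Jacobson radical, then `e` lies in the radical, so `1 - e` has a left inverse, and
`(1 - e) * e = 0` forces `e = 0`. For matrices, this applies because the matrices with entries in
the radical of the coefficient ring lie in the radical of the matrix ring.
-/

section Ring

variable {A : Type*} [Ring A]

theorem eq_zero_of_isIdempotentElem_of_mem_jacobson {e : A} (he : IsIdempotentElem e)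
    (hmem : e ∈ Ring.jacobson A) : e = 0 := by
  rw [← Ideal.jacobson_bot] at hmem
  obtain ⟨z, hz⟩ := Ideal.mem_jacobson_iff.mp hmem (-1)
  have z_mul : z * (1 - e) = 1 := by
    calc
      z * (1 - e) = z * -1 * e + z := by noncomm_ring
      _ = 1 := sub_eq_zero.mp hz
  calc
    e = z * (1 - e) * e := by rw [z_mul, one_mul]
    _ = 0 := by rw [mul_assoc, he.one_sub_mul_self, mul_zero]

theorem isIdempotentElem_invOf_two_mul_one_sub [Invertible (2 : A)] {a : A} (ha : a * a = 1) :
    IsIdempotentElem (⅟2 * (1 - a)) := by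
  have comm : Commute (1 - a) (⅟2 : A) := (Nat.cast_commute 2 (1 - a)).symm.invOf_right
  have sq : (1 - a) * (1 - a) = 2 * (1 - a) := by
    calc
      (1 - a) * (1 - a) = 1 - 2 * a + a * a := by noncomm_ring
      _ = 2 * (1 - a) := by rw [ha]; noncomm_ring
  calc
    ⅟2 * (1 - a) * (⅟2 * (1 - a)) = ⅟2 * (⅟2 * ((1 - a) * (1 - a))) := by
      rw [mul_assoc, comm.left_comm]
    _ = ⅟2 * (1 - a) := by rw [sq, invOf_mul_cancel_left]

theorem eq_one_of_mul_self_eq_one_of_sub_one_mem_jacobson (h2 : IsUnit (2 : A)) {a : A}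
    (ha : a * a = 1) (hmem : a - 1 ∈ Ring.jacobson A) : a = 1 := by
  have := h2.invertible
  have half_mem : ⅟2 * (1 - a) ∈ Ring.jacobson A :=
    Ideal.mul_mem_left _ _ (sub_mem_comm_iff.mp hmem)
  have half_eq_zero : ⅟2 * (1 - a) = 0 :=
    eq_zero_of_isIdempotentElem_of_mem_jacobson (isIdempotentElem_invOf_two_mul_one_sub ha) half_mem
  exact (sub_eq_zero.mp ((isUnit_of_invertible (⅟2 : A)).mul_right_eq_zero.mp half_eq_zero)).symm

end Ring

section Matrix

variable {R n : Type*} [Ring R] [Fintype n] [DecidableEq n]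

theorem matrix_mem_jacobson_of_forall_mem {M : Matrix n n R}
    (hM : ∀ i j, M i j ∈ Ring.jacobson R) : M ∈ Ring.jacobson (Matrix n n R) := by
  rw [← Ideal.jacobson_bot] at hM ⊢
  rw [← Ideal.matrix_bot n]
  exact Ideal.matrix_jacobson_le ⊥ hM

theorem stmt14_general (h2 : IsUnit (2 : R)) (M : Matrix n n R) (hM : M * M = 1)
    (hmod : ∀ i j, (M - 1) i j ∈ Ring.jacobson R) : M = 1 := by
  have h2_matrix : IsUnit (2 : Matrix n n R) := by
    simpa only [map_ofNat] using h2.map (Matrix.scalar n)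
  exact eq_one_of_mul_self_eq_one_of_sub_one_mem_jacobson h2_matrix hM
    (matrix_mem_jacobson_of_forall_mem hmod)

end Matrix

/-- Over a commutative local ring `R` with `2` invertible (maximal
ideal `J`), if `M` is an `n × n` matrix with `M² = 1` and `M ≡ 1 (mod J)`, then
`M = 1`. -/
theorem stmt14 {R : Type*} [CommRing R] [IsLocalRing R] [Invertible (2 : R)]
    {n : ℕ} (M : Matrix (Fin n) (Fin n) R) (hM : M * M = 1)
    (hmod : ∀ i j, (M - 1) i j ∈ IsLocalRing.maximalIdeal R) :
    M = 1 := by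
  rw [← IsLocalRing.ringJacobson_eq_maximalIdeal] at hmod
  exact stmt14_general (isUnit_of_invertible 2) M hM hmod
end

section
/- Let b be an n×n matrix over R with b² = 1, and let L ⊆ R^n be a free rank-1 submodule that is a direct summand of R^n and is invariant under b (b·L ⊆ L). Then either b·x = x for all x ∈ L, or b·x = −x for all x ∈ L. -/
/-!
A generator `v` of `L` is an eigenvector, `b v = c v`, and `b² = 1` gives `(1 + c)(c - 1) v = 0` and
`(1 - c)(c + 1) v = 0`. Since `(1 + c) + (1 - c) = 2` is a unit of the local ring, so is one of the
two summands; cancelling it leaves `c v = v` or `c v = -v`.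
-/

section LocalRing

variable {R M : Type*} [Ring R] [IsLocalRing R] [Invertible (2 : R)] [AddCommGroup M] [Module R M]

theorem isUnit_one_add_or_isUnit_one_sub (c : R) : IsUnit (1 + c) ∨ IsUnit (1 - c) := by
  have hsum : (1 + c) + (1 - c) = 2 := by rw [add_add_sub_cancel, one_add_one_eq_two]
  exact IsLocalRing.isUnit_or_isUnit_of_isUnit_add (hsum ▸ isUnit_of_invertible 2)

theorem smul_eq_self_or_eq_neg_self_of_smul_smul_eq_self {c : R} {v : M} (h : c • c • v = v) :
    c • v = v ∨ c • v = -v := by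
  refine (isUnit_one_add_or_isUnit_one_sub c).imp (fun hc ↦ ?_) (fun hc ↦ ?_)
  · have hcancel : (1 + c) • (c • v - v) = 0 := by
      rw [add_smul, one_smul, smul_sub, h, sub_add_sub_cancel, sub_self]
    exact sub_eq_zero.mp (hc.smul_eq_zero.mp hcancel)
  · have hcancel : (1 - c) • (c • v + v) = 0 := by
      rw [sub_smul, one_smul, smul_add, h, add_comm v, sub_self]
    exact eq_neg_of_add_eq_zero_left (hc.smul_eq_zero.mp hcancel)

theorem stmt15_general (f : Module.End R M) (L : Submodule R M) [L.IsPrincipal]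
    (hf : ∀ x ∈ L, f (f x) = x) (hL : ∀ x ∈ L, f x ∈ L) :
    (∀ x ∈ L, f x = x) ∨ (∀ x ∈ L, f x = -x) := by
  obtain ⟨v, rfl⟩ := Submodule.IsPrincipal.principal L
  have hv : v ∈ Submodule.span R {v} := Submodule.mem_span_singleton_self v
  obtain ⟨c, hc⟩ := Submodule.mem_span_singleton.mp (hL v hv)
  have hcc : c • c • v = v := by rw [hc, ← map_smul, hc, hf v hv]
  refine (smul_eq_self_or_eq_neg_self_of_smul_smul_eq_self hcc).imp (fun h ↦ ?_) (fun h ↦ ?_)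
  · exact LinearMap.eqOn_span' (g := .id) (Set.eqOn_singleton.mpr (hc.symm.trans h))
  · exact LinearMap.eqOn_span' (g := -.id) (Set.eqOn_singleton.mpr (hc.symm.trans h))

end LocalRing

/-- Over a commutative local ring `R` with `2` invertible, let `b` be
an `n × n` matrix with `b² = 1`, and let `L ⊆ R^n` be a free rank-one submodule which
is a direct summand of `R^n` and is invariant under `b`.  Then either `b` fixes every
element of `L`, or `b` negates every element of `L`. -/
theorem stmt15 {R : Type*} [CommRing R] [IsLocalRing R] [Invertible (2 : R)]
    {n : ℕ} (b : Matrix (Fin n) (Fin n) R) (hb : b * b = 1)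
    (L : Submodule R (Fin n → R))
    (hfree : Module.Free R L) (hrank : Module.rank R L = 1)
    (hsumm : ∃ L' : Submodule R (Fin n → R), IsCompl L L')
    (hinvar : ∀ x ∈ L, b.mulVec x ∈ L) :
    (∀ x ∈ L, b.mulVec x = x) ∨ (∀ x ∈ L, b.mulVec x = -x) := by
  have : L.IsPrincipal := L.rank_le_one_iff_isPrincipal.mp hrank.le
  exact stmt15_general b.mulVecLin L (fun x _ ↦ by simp [hb]) hinvar
end
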